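/- arXiv:1306.1033 — 2 statements merged into one kernel-verified Lean document; each statement's English description precedes it below -/
import Mathlib

section
/- Let p be a prime, λ a partition and i ∈ {0,…,p−1}. If λ does not have a removable i-node together with an addable i-node in a later ramp, then the partition obtained from λ^rest by removing all its normal i-nodes equals the p-restrictisation of the partition obtained from λ by removing all its removable i-nodes; that is, (λ^rest)^{▾i} = (λ^{▿i})^rest. -/
/-- `f` represents a partition: weakly decreasing with finitely many nonzero parts.
`f r` is the `(r+1)`-th part (0-indexed). -/
def IsPartition (f : ℕ → ℕ) : Prop :=
  (∀ m n : ℕ, m ≤ n → f n ≤ f m) ∧ ∃ N, ∀ n, N ≤ n → f n = 0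

/-- `(r, c)` (0-indexed) is a node of the Young diagram of `f`. -/
def Cell (f : ℕ → ℕ) (r c : ℕ) : Prop := c < f r

/-- The ramp containing the 0-indexed node `(r, c)`; this equals `c-1+(p-1)(r-1)` in
the paper's 1-indexed convention. -/
def rampOf (p : ℕ) (r c : ℕ) : ℤ := (c : ℤ) + ((p : ℤ) - 1) * (r : ℤ)

/-- The `p`-residue of the node `(r, c)`. -/
def res (p : ℕ) (r c : ℕ) : ZMod p := (c : ZMod p) - (r : ZMod p)

/-- `(r, c)` is a removable node of `f`. -/
def Removable (f : ℕ → ℕ) (r c : ℕ) : Prop := c + 1 = f r ∧ f (r + 1) < f r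

/-- `(r, c)` is an addable node of `f`. -/
def Addable (f : ℕ → ℕ) (r c : ℕ) : Prop := c = f r ∧ (r = 0 ∨ f r < f (r - 1))

/-- `rmp_l(λ)`: the number of nodes of `λ` in ramp `l`. -/
noncomputable def rmp (p : ℕ) (f : ℕ → ℕ) (l : ℤ) : ℕ :=
  Set.ncard {q : ℕ × ℕ | Cell f q.1 q.2 ∧ rampOf p q.1 q.2 = l}

/-- `f` is `p`-restricted: successive differences of parts are `< p`. -/
def PRestricted (p : ℕ) (f : ℕ → ℕ) : Prop := ∀ r, f r < f (r + 1) + p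

/-- `g` is the `p`-restrictisation `f^rest` of `f`: the (unique) `p`-restricted
partition with the same number of nodes in each ramp as `f` (obtained by sliding
all nodes in each ramp as far towards the first row as possible). -/
def IsRest (p : ℕ) (f g : ℕ → ℕ) : Prop :=
  IsPartition g ∧ PRestricted p g ∧ ∀ l : ℤ, rmp p g l = rmp p f l

/-- Row `r` of `f` contains a removable node of residue `i`. -/
def RemRes (p : ℕ) (f : ℕ → ℕ) (i : ZMod p) (r : ℕ) : Prop :=
  ∃ c, Removable f r c ∧ res p r c = i

/-- Row `r` of `f` contains an addable node of residue `i`. -/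
def AddRes (p : ℕ) (f : ℕ → ℕ) (i : ZMod p) (r : ℕ) : Prop :=
  ∃ c, Addable f r c ∧ res p r c = i

/-- Row `r` of `f` contains a normal `i`-node: a removable `i`-node whose `−` sign
survives the reduction of the `i`-signature (read top to bottom, `+` for addable
`i`-nodes and `−` for removable `i`-nodes, successively deleting adjacent pairs `−+`);
equivalently, for every lower row `s` carrying an addable `i`-node, the number of
addable `i`-nodes in rows `(r, s]` is at most the number of removable `i`-nodes in
rows `(r, s)`. -/
def NormalRow (p : ℕ) (f : ℕ → ℕ) (i : ZMod p) (r : ℕ) : Prop :=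
  RemRes p f i r ∧ ∀ s, r < s → AddRes p f i s →
    Set.ncard {t : ℕ | r < t ∧ t ≤ s ∧ AddRes p f i t} ≤
      Set.ncard {t : ℕ | r < t ∧ t < s ∧ RemRes p f i t}

/-- The number of normal `i`-nodes of `f`. -/
noncomputable def norCount (p : ℕ) (f : ℕ → ℕ) (i : ZMod p) : ℕ :=
  Set.ncard {r : ℕ | NormalRow p f i r}

/-- The number of removable `i`-nodes of `f`. -/
noncomputable def remCount (p : ℕ) (f : ℕ → ℕ) (i : ZMod p) : ℕ :=
  Set.ncard {r : ℕ | RemRes p f i r}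

/-- `f` has a removable `i`-node together with an addable `i`-node in a strictly
later ramp. -/
def HasRemAddLater (p : ℕ) (f : ℕ → ℕ) (i : ZMod p) : Prop :=
  ∃ r c s d, Removable f r c ∧ res p r c = i ∧ Addable f s d ∧ res p s d = i ∧
    rampOf p r c < rampOf p s d

open Classical in
/-- `f` with all its normal `i`-nodes removed (`f^{▾i}`). -/
noncomputable def remNorm (p : ℕ) (i : ZMod p) (f : ℕ → ℕ) : ℕ → ℕ :=
  fun r => f r - (if NormalRow p f i r then 1 else 0)

open Classical in
/-- `f` with all its removable `i`-nodes removed (`f^{▿i}`). -/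
noncomputable def remRem (p : ℕ) (i : ZMod p) (f : ℕ → ℕ) : ℕ → ℕ :=
  fun r => f r - (if RemRes p f i r then 1 else 0)

/-- The shifted row end: ramp of the first node to the right of row `r`. -/
def rowEnd (p : ℕ) (f : ℕ → ℕ) (r : ℕ) : ℕ := f r + (p - 1) * r

lemma le_rowEnd {p : ℕ} (hp : 2 ≤ p) (f : ℕ → ℕ) (r : ℕ) : r ≤ rowEnd p f r := by
  unfold rowEnd
  have : 1 * r ≤ (p - 1) * r := Nat.mul_le_mul_right _ (by omega)
  omega

lemma rowEnd_cast {p : ℕ} (hp : 2 ≤ p) (f : ℕ → ℕ) (r : ℕ) :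
    ((rowEnd p f r : ℕ) : ZMod p) = (f r : ZMod p) - r := by
  unfold rowEnd
  have h1 : ((p - 1 : ℕ) : ZMod p) = -1 := by
    rw [Nat.cast_sub (by omega)]; simp
  push_cast
  rw [h1]; ring

lemma remRes_iff {p : ℕ} (hp : 2 ≤ p) (f : ℕ → ℕ) (i : ZMod p) (r : ℕ) :
    RemRes p f i r ↔ f (r + 1) < f r ∧ ((rowEnd p f r : ℕ) : ZMod p) = i + 1 := by
  rw [rowEnd_cast hp]
  unfold RemRes Removable res
  constructor
  · rintro ⟨c, ⟨h1, h2⟩, h3⟩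
    refine ⟨h2, ?_⟩
    rw [← h1, ← h3]; push_cast; ring
  · rintro ⟨h1, h2⟩
    refine ⟨f r - 1, ⟨by omega, h1⟩, ?_⟩
    rw [Nat.cast_sub (by omega)]
    push_cast
    linear_combination h2

lemma addRes_iff {p : ℕ} (hp : 2 ≤ p) (f : ℕ → ℕ) (i : ZMod p) (r : ℕ) :
    AddRes p f i r ↔ (r = 0 ∨ f r < f (r - 1)) ∧ ((rowEnd p f r : ℕ) : ZMod p) = i := by
  rw [rowEnd_cast hp]
  unfold AddRes Addable res
  constructor
  · rintro ⟨c, ⟨h1, h2⟩, h3⟩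
    subst h1
    exact ⟨h2, h3⟩
  · rintro ⟨h1, h2⟩
    exact ⟨f r, ⟨rfl, h1⟩, h2⟩

lemma fin_of_le {p : ℕ} (hp : 2 ≤ p) (f : ℕ → ℕ) (M : ℕ) (S : Set ℕ)
    (h : ∀ r ∈ S, rowEnd p f r ≤ M) : S.Finite :=
  (Set.finite_Iic M).subset fun r hr => (le_rowEnd hp f r).trans (h r hr)

lemma rmp_eq {p : ℕ} (hp : 2 ≤ p) (f : ℕ → ℕ) (l : ℕ) :
    rmp p f l = Set.ncard {r : ℕ | (p - 1) * r ≤ l ∧ l < rowEnd p f r} := by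
  unfold rmp
  have hinj : Function.Injective (fun r : ℕ => (r, l - (p - 1) * r)) := by
    intro a b h
    exact (Prod.ext_iff.1 h).1
  rw [← Set.ncard_image_of_injective _ hinj]
  congr 1
  ext ⟨r, c⟩
  have hcast : ((p : ℤ) - 1) * (r : ℤ) = (((p - 1) * r : ℕ) : ℤ) := by
    push_cast [Nat.cast_sub (show 1 ≤ p by omega)]; ring
  simp only [Set.mem_ofPred_eq, Set.mem_image, Prod.mk.injEq, Cell, rampOf, rowEnd, hcast]
  constructor
  · rintro ⟨h1, h2⟩
    refine ⟨r, ⟨by omega, by omega⟩, rfl, by omega⟩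
  · rintro ⟨r', ⟨h1, h2⟩, rfl, h4⟩
    omega

/-- Number of rows with `rowEnd ≤ l`. -/
noncomputable def cum (p : ℕ) (f : ℕ → ℕ) (l : ℕ) : ℕ := Set.ncard {r : ℕ | rowEnd p f r ≤ l}

/-- Number of rows with `rowEnd = l`. -/
noncomputable def cnt (p : ℕ) (f : ℕ → ℕ) (l : ℕ) : ℕ := Set.ncard {r : ℕ | rowEnd p f r = l}

lemma cum_add_rmp {p : ℕ} (hp : 2 ≤ p) (f : ℕ → ℕ) (l : ℕ) :
    cum p f l + rmp p f l = Set.ncard {r : ℕ | (p - 1) * r ≤ l} := by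
  have hfin : Set.Finite {r : ℕ | (p - 1) * r ≤ l} := by
    refine fin_of_le hp (fun _ => 0) l _ fun r hr => ?_
    simpa [rowEnd] using hr
  rw [rmp_eq hp, cum, ← Set.ncard_union_eq ?_ ?_ ?_]
  · congr 1
    ext r
    simp only [Set.mem_union, Set.mem_ofPred_eq, rowEnd]
    omega
  · rw [Set.disjoint_left]
    intro r h1 h2
    simp only [Set.mem_ofPred_eq] at h1 h2
    omega
  · exact fin_of_le hp f l _ fun r hr => hr
  · exact hfin.subset fun r hr => hr.1

lemma cum_eq {p : ℕ} (hp : 2 ≤ p) {f g : ℕ → ℕ} (h : ∀ l : ℤ, rmp p g l = rmp p f l) (l : ℕ) :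
    cum p g l = cum p f l := by
  have h1 := cum_add_rmp hp f l
  have h2 := cum_add_rmp hp g l
  have h3 := h l
  omega

lemma cum_succ {p : ℕ} (hp : 2 ≤ p) (f : ℕ → ℕ) (l : ℕ) :
    cum p f (l + 1) = cum p f l + cnt p f (l + 1) := by
  unfold cum cnt
  rw [← Set.ncard_union_eq ?_ ?_ ?_]
  · congr 1
    ext r
    simp only [Set.mem_union, Set.mem_ofPred_eq]
    omega
  · rw [Set.disjoint_left]
    intro r h1 h2
    simp only [Set.mem_ofPred_eq] at h1 h2
    omega
  · exact fin_of_le hp f l _ fun r hr => hr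
  · exact fin_of_le hp f (l + 1) _ fun r hr => le_of_eq hr

lemma cnt_eq {p : ℕ} (hp : 2 ≤ p) {f g : ℕ → ℕ} (h : ∀ l : ℤ, rmp p g l = rmp p f l) (l : ℕ) :
    cnt p g (l + 1) = cnt p f (l + 1) := by
  have h1 := cum_succ hp f l
  have h2 := cum_succ hp g l
  have h3 := cum_eq hp h l
  have h4 := cum_eq hp h (l + 1)
  omega

/-- Number of removable `i`-nodes in ramp `m`. -/
noncomputable def remR (p : ℕ) (i : ZMod p) (f : ℕ → ℕ) (m : ℕ) : ℕ :=
  Set.ncard {r : ℕ | RemRes p f i r ∧ rowEnd p f r = m + 1}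

/-- Number of addable `i`-nodes in ramp `m`. -/
noncomputable def addR (p : ℕ) (i : ZMod p) (f : ℕ → ℕ) (m : ℕ) : ℕ :=
  Set.ncard {r : ℕ | AddRes p f i r ∧ rowEnd p f r = m}

lemma rowEnd_succ {p : ℕ} (f : ℕ → ℕ) (r : ℕ) :
    rowEnd p f (r + 1) = f (r + 1) + (p - 1) * r + (p - 1) := by
  unfold rowEnd; ring

lemma rem_add {p : ℕ} (hp : 2 ≤ p) {f : ℕ → ℕ} (hf : IsPartition f) (i : ZMod p) (m : ℕ)
    (hm : (m : ZMod p) = i) :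
    remR p i f m + cnt p f (m + p) = addR p i f (m + p) + cnt p f (m + 1) := by
  have hmono : ∀ r, f (r + 1) ≤ f r := fun r => hf.1 _ _ (Nat.le_succ r)
  set T : Set ℕ := {r | rowEnd p f r = m + 1 ∧ rowEnd p f (r + 1) = m + p} with hT
  have hTfin : T.Finite := fin_of_le hp f (m + 1) _ fun r hr => le_of_eq hr.1
  have h1 : cnt p f (m + 1) = remR p i f m + T.ncard := by
    unfold cnt remR
    rw [← Set.ncard_union_eq ?_ ?_ ?_]
    · congr 1
      ext r
      have := hmono r
      simp only [Set.mem_union, Set.mem_ofPred_eq, hT, remRes_iff hp, rowEnd_succ]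
      constructor
      · intro h
        have hc : ((rowEnd p f r : ℕ) : ZMod p) = i + 1 := by rw [h]; push_cast; rw [hm]
        simp only [h, hc]
        simp only [rowEnd] at h
        by_cases h2 : f (r + 1) < f r
        · left; exact ⟨⟨h2, by rw [← hm]; push_cast; ring⟩, trivial⟩
        · right; exact ⟨trivial, by omega⟩
      · rintro (h | h)
        · exact h.2
        · exact h.1
    · rw [Set.disjoint_left]
      intro r h1 h2
      simp only [Set.mem_ofPred_eq, hT, remRes_iff hp, rowEnd_succ] at h1 h2
      simp only [rowEnd] at h1 h2
      omega
    · exact fin_of_le hp f (m + 1) _ fun r hr => le_of_eq hr.2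
    · exact hTfin
  have h2 : cnt p f (m + p) = addR p i f (m + p) + T.ncard := by
    have hinj : Function.Injective (fun r : ℕ => r + 1) := fun a b h => by simpa using h
    rw [← Set.ncard_image_of_injective T hinj]
    unfold cnt addR
    rw [← Set.ncard_union_eq ?_ ?_ ?_]
    · congr 1
      ext r
      simp only [Set.mem_union, Set.mem_ofPred_eq, hT, addRes_iff hp, Set.mem_image]
      constructor
      · intro h
        have hc : ((rowEnd p f r : ℕ) : ZMod p) = i := by rw [h]; push_cast; simp [hm]
        by_cases h2 : r = 0 ∨ f r < f (r - 1)
        · left; exact ⟨⟨h2, hc⟩, h⟩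
        · right
          push Not at h2
          obtain ⟨k, rfl⟩ := Nat.exists_eq_succ_of_ne_zero h2.1
          refine ⟨k, ⟨?_, h⟩, rfl⟩
          have := hmono k
          have h3 := h2.2
          simp only [Nat.succ_eq_add_one, Nat.add_sub_cancel] at h3 h
          rw [rowEnd_succ] at h
          simp only [rowEnd]
          omega
      · rintro (h | ⟨k, h, rfl⟩)
        · exact h.2
        · exact h.2
    · rw [Set.disjoint_left]
      rintro _ h1 ⟨k, h2, rfl⟩
      simp only [Set.mem_ofPred_eq, hT, addRes_iff hp, rowEnd_succ, Nat.add_sub_cancel] at h1 h2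
      simp only [rowEnd] at h1 h2
      omega
    · exact fin_of_le hp f (m + p) _ fun r hr => le_of_eq hr.2
    · exact hTfin.image _
  omega

/-- Counting the elements with at least `a` larger elements. -/
lemma card_tail (S : Finset ℕ) (a : ℕ) :
    (S.filter fun r => a ≤ (S.filter fun t => r < t).card).card = S.card - a := by
  induction S using Finset.induction_on_min with
  | empty => simp
  | insert x S hx ih =>
    have hxS : x ∉ S := fun h => lt_irrefl _ (hx x h)
    have e1 : ((insert x S).filter fun t => x < t) = S := by
      ext t; simp only [Finset.mem_filter, Finset.mem_insert]
      constructor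
      · rintro ⟨rfl | h, h2⟩
        · omega
        · exact h
      · intro h; exact ⟨Or.inr h, hx t h⟩
    have e2 : ∀ r ∈ S, ((insert x S).filter fun t => r < t) = S.filter fun t => r < t := by
      intro r hr
      have := hx r hr
      rw [Finset.filter_insert, if_neg (by omega)]
    rw [Finset.filter_insert, e1]
    have e3 : (S.filter fun r => a ≤ ((insert x S).filter fun t => r < t).card)
        = S.filter fun r => a ≤ (S.filter fun t => r < t).card := by
      apply Finset.filter_congr
      intro r hr
      rw [e2 r hr]
    rw [e3, Finset.card_insert_of_notMem hxS]
    split_ifs with h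
    · rw [Finset.card_insert_of_notMem (by simp [hxS]), ih]; omega
    · rw [ih]; omega

lemma ncard_tail (S : Set ℕ) (hS : S.Finite) (a : ℕ) :
    Set.ncard {r | r ∈ S ∧ a ≤ Set.ncard {t | t ∈ S ∧ r < t}} = S.ncard - a := by
  classical
  lift S to Finset ℕ using hS
  rw [Set.ncard_coe_finset, ← card_tail S a, ← Set.ncard_coe_finset]
  congr 1
  ext r
  simp only [Finset.coe_filter, Set.mem_ofPred_eq, Finset.mem_coe]
  have : {t | t ∈ S ∧ r < t} = ((S.filter fun t => r < t : Finset ℕ) : Set ℕ) := by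
    ext; simp
  rw [this, Set.ncard_coe_finset]

lemma rowEnd_mono {p : ℕ} {g : ℕ → ℕ} (hg : PRestricted p g) : Monotone (rowEnd p g) := by
  apply monotone_nat_of_le_succ
  intro r
  have := hg r
  rw [rowEnd_succ]
  unfold rowEnd
  omega

/-- two naturals congruent mod `p` within distance `< p` are equal. -/
lemma eq_of_cast {p a b : ℕ} (h : (a : ZMod p) = b) (h1 : a ≤ b) (h2 : b < a + p) : a = b := by
  rw [ZMod.natCast_eq_natCast_iff] at h
  obtain ⟨k, hk⟩ := (Nat.modEq_iff_dvd' h1).1 h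
  rcases Nat.eq_zero_or_pos k with rfl | hk'
  · omega
  · have : p * 1 ≤ p * k := Nat.mul_le_mul_left _ hk'
    omega

lemma normal_of {p : ℕ} (hp : 2 ≤ p) {g : ℕ → ℕ} (hg : PRestricted p g) (i : ZMod p)
    (m : ℕ) (hm : (m : ZMod p) = i) (r : ℕ) (hr : RemRes p g i r) (hrm : rowEnd p g r = m + 1)
    (ha : addR p i g (m + p) ≤
      Set.ncard {t | (RemRes p g i t ∧ rowEnd p g t = m + 1) ∧ r < t})
    (hlater : ∀ j, addR p i g (m + (j + 1) * p) ≤ remR p i g (m + j * p)) :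
    NormalRow p g i r := by
  have hmono := rowEnd_mono hg
  refine ⟨hr, ?_⟩
  have key : ∀ j, Set.ncard {t | r < t ∧ AddRes p g i t ∧ rowEnd p g t ≤ m + (j + 1) * p} ≤
      Set.ncard {t | r < t ∧ RemRes p g i t ∧ rowEnd p g t < m + (j + 1) * p} := by
    have hcast : ∀ j : ℕ, ((m + j * p : ℕ) : ZMod p) = i := by
      intro j; push_cast; simp [hm]
    intro j
    induction j with
    | zero =>
      refine le_trans (Set.ncard_le_ncard ?_ ?_) (ha.trans (Set.ncard_le_ncard ?_ ?_))
      · rintro t ⟨h1, h2, h3⟩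
        refine ⟨h2, ?_⟩
        have h4 := hmono h1.le
        have h5 := ((addRes_iff hp _ _ _).1 h2).2
        refine eq_of_cast (p := p) ?_ (by omega) (by omega)
        rw [h5]; push_cast; simp [hm]
      · exact fin_of_le hp g (m + p) _ fun r hr => le_of_eq hr.2
      · rintro t ⟨⟨h1, h2⟩, h3⟩
        exact ⟨h3, h1, by omega⟩
      · exact fin_of_le hp g (m + (0 + 1) * p) _ fun r hr => hr.2.2.le
    | succ j ih =>
      have hl := hlater (j + 1)
      have hexp : m + (j + 1 + 1) * p = m + (j + 1) * p + p := by ring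
      have hexp2 : m + (j + 1) * p = m + j * p + p := by ring
      calc _ ≤ Set.ncard ({t | r < t ∧ AddRes p g i t ∧ rowEnd p g t ≤ m + (j + 1) * p} ∪
              {t | AddRes p g i t ∧ rowEnd p g t = m + (j + 1 + 1) * p}) := by
            apply Set.ncard_le_ncard
            · rintro t ⟨h1, h2, h3⟩
              by_cases h4 : rowEnd p g t ≤ m + (j + 1) * p
              · exact Or.inl ⟨h1, h2, h4⟩
              · refine Or.inr ⟨h2, ?_⟩
                have h5 := ((addRes_iff hp _ _ _).1 h2).2
                refine eq_of_cast (p := p) ?_ h3 (by omega)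
                rw [h5, hcast]
            · refine fin_of_le hp g (m + (j + 1 + 1) * p) _ ?_
              rintro t (h | h)
              · have := h.2.2; omega
              · exact h.2.le
        _ ≤ _ := Set.ncard_union_le _ _
        _ ≤ Set.ncard {t | r < t ∧ RemRes p g i t ∧ rowEnd p g t < m + (j + 1) * p} +
              Set.ncard {t | RemRes p g i t ∧ rowEnd p g t = m + (j + 1) * p + 1} :=
            Nat.add_le_add ih hl
        _ ≤ _ := by
            rw [← Set.ncard_union_eq ?_ ?_ ?_]
            · apply Set.ncard_le_ncard
              · rintro t (⟨h1, h2, h3⟩ | ⟨h1, h2⟩)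
                · exact ⟨h1, h2, by omega⟩
                · refine ⟨?_, h1, by omega⟩
                  by_contra hlt
                  have := hmono (not_lt.1 hlt)
                  omega
              · exact fin_of_le hp g (m + (j + 1 + 1) * p) _ fun r hr => hr.2.2.le
            · rw [Set.disjoint_left]
              rintro t ⟨_, _, h1⟩ ⟨_, h2⟩
              omega
            · exact fin_of_le hp g (m + (j + 1) * p) _ fun r hr => hr.2.2.le
            · exact fin_of_le hp g (m + (j + 1) * p + 1) _ fun r hr => hr.2.le
  intro s hs hadd
  have h1 := hmono hs.le
  have h5 := ((addRes_iff hp _ _ _).1 hadd).2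
  have h6 : (m : ZMod p) = (rowEnd p g s : ℕ) := by rw [hm, h5]
  rw [ZMod.natCast_eq_natCast_iff] at h6
  obtain ⟨k, hk⟩ := (Nat.modEq_iff_dvd' (by omega)).1 h6
  obtain ⟨j, rfl⟩ : ∃ j, k = j + 1 := by
    rcases k with _ | j
    · omega
    · exact ⟨j, rfl⟩
  have hs' : rowEnd p g s = m + (j + 1) * p := by rw [mul_comm]; omega
  refine le_trans (Set.ncard_le_ncard ?_ ?_) ((key j).trans (Set.ncard_le_ncard ?_ ?_))
  · rintro t ⟨h1, h2, h3⟩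
    exact ⟨h1, h3, hs' ▸ hmono h2⟩
  · exact fin_of_le hp g _ _ fun r hr => hr.2.2
  · rintro t ⟨h1, h2, h3⟩
    refine ⟨h1, ?_, h2⟩
    by_contra hlt
    have := hmono (not_lt.1 hlt)
    omega
  · exact (Set.finite_Iio s).subset fun t ht => ht.2.1

lemma of_normal {p : ℕ} (hp : 2 ≤ p) {g : ℕ → ℕ} (hg : PRestricted p g) (i : ZMod p)
    (m : ℕ) (hm : (m : ZMod p) = i) (r : ℕ) (hr : NormalRow p g i r)
    (hrm : rowEnd p g r = m + 1) :
    addR p i g (m + p) ≤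
      Set.ncard {t | (RemRes p g i t ∧ rowEnd p g t = m + 1) ∧ r < t} := by
  have hmono := rowEnd_mono hg
  have hlt : ∀ t u, rowEnd p g t < rowEnd p g u → t < u := by
    intro t u h
    by_contra hlt
    have := hmono (not_lt.1 hlt)
    omega
  have hfin : Set.Finite {t : ℕ | AddRes p g i t ∧ rowEnd p g t = m + p} :=
    fin_of_le hp g (m + p) _ fun r hr => le_of_eq hr.2
  rcases Set.eq_empty_or_nonempty {t : ℕ | AddRes p g i t ∧ rowEnd p g t = m + p} with he | hne
  · unfold addR; rw [he]; simp
  · obtain ⟨s, hs, hmax⟩ := Set.exists_max_image _ id hfin hne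
    refine le_trans (Set.ncard_le_ncard ?_ ?_) ((hr.2 s (hlt _ _ ?_) hs.1).trans
      (Set.ncard_le_ncard ?_ ?_))
    · intro t ht
      refine ⟨hlt _ _ ?_, hmax t ht, ht.1⟩
      have := ht.2
      omega
    · exact (Set.finite_Iic s).subset fun t ht => ht.2.1
    · have := hs.2
      omega
    · rintro t ⟨h1, h2, h3⟩
      refine ⟨⟨h3, ?_⟩, h1⟩
      have h4 := hmono h1.le
      have h5 := hmono h2.le
      have h6 := ((remRes_iff hp _ _ _).1 h3).2
      have h7 := hs.2
      refine (eq_of_cast (p := p) ?_ (by omega) (by omega)).symm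
      rw [h6]; push_cast; rw [hm]
    · exact fin_of_le hp g (m + 1) _ fun r hr => le_of_eq hr.1.2

lemma cum_removed {p : ℕ} (hp : 2 ≤ p) (f f' : ℕ → ℕ) (P : ℕ → Prop)
    (hP : ∀ r, P r → f' r + 1 = f r) (hN : ∀ r, ¬ P r → f' r = f r) (m : ℕ) :
    cum p f' m = cum p f m + Set.ncard {r | P r ∧ rowEnd p f r = m + 1} := by
  unfold cum
  rw [← Set.ncard_union_eq ?_ ?_ ?_]
  · congr 1
    ext r
    simp only [Set.mem_union, Set.mem_ofPred_eq, rowEnd]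
    by_cases h : P r
    · have := hP r h
      simp only [h, true_and]
      omega
    · have := hN r h
      simp only [h, false_and, or_false]
      omega
  · rw [Set.disjoint_left]
    intro r h1 h2
    simp only [Set.mem_ofPred_eq] at h1 h2
    omega
  · exact fin_of_le hp f m _ fun r hr => hr
  · exact fin_of_le hp f (m + 1) _ fun r hr => le_of_eq hr.2

lemma mono_mem_iff {p : ℕ} (hp : 2 ≤ p) {g : ℕ → ℕ} (hg : Monotone (rowEnd p g)) (m r : ℕ) :
    rowEnd p g r ≤ m ↔ r < cum p g m := by
  have hfin : Set.Finite {r | rowEnd p g r ≤ m} := fin_of_le hp g m _ fun r hr => hr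
  constructor
  · intro h
    have : Set.ncard (Set.Iic r) ≤ cum p g m :=
      Set.ncard_le_ncard (fun t ht => (hg ht).trans h) hfin
    have h2 : Set.ncard (Set.Iic r) = r + 1 := by
      rw [← Finset.coe_Iic, Set.ncard_coe_finset]; simp
    omega
  · intro h
    by_contra hc
    have : cum p g m ≤ Set.ncard (Set.Iio r) := by
      refine Set.ncard_le_ncard (fun t ht => ?_) (Set.finite_Iio r)
      by_contra hlt
      have h1 := hg (not_lt.1 hlt)
      have h2 : rowEnd p g t ≤ m := ht
      omega
    have h2 : Set.ncard (Set.Iio r) = r := by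
      rw [← Finset.coe_Iio, Set.ncard_coe_finset]; simp
    omega

lemma unique_rest {p : ℕ} (hp : 2 ≤ p) {g h : ℕ → ℕ} (hg : Monotone (rowEnd p g))
    (hh : Monotone (rowEnd p h)) (hc : ∀ m, cum p g m = cum p h m) : g = h := by
  funext r
  have key : ∀ m, rowEnd p g r ≤ m ↔ rowEnd p h r ≤ m := by
    intro m
    rw [mono_mem_iff hp hg, mono_mem_iff hp hh, hc]
  have h1 := (key _).1 le_rfl
  have h2 := (key _).2 le_rfl
  unfold rowEnd at h1 h2
  omega

lemma normal_up {p : ℕ} (hp : 2 ≤ p) {g : ℕ → ℕ} (i : ZMod p) (r : ℕ)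
    (he : rowEnd p g r = rowEnd p g (r + 1)) (hn : NormalRow p g i (r + 1)) :
    NormalRow p g i r := by
  haveI : Fact (1 < p) := ⟨by omega⟩
  have h1 := ((remRes_iff hp _ _ _).1 hn.1).2
  refine ⟨(remRes_iff hp _ _ _).2 ⟨?_, by rw [he, h1]⟩, ?_⟩
  · rw [rowEnd_succ] at he
    unfold rowEnd at he
    omega
  · intro s hs hadd
    have hnot : ¬ AddRes p g i (r + 1) := by
      intro hA
      have h2 := ((addRes_iff hp _ _ _).1 hA).2
      rw [h1] at h2
      simp at h2
    have hs' : r + 1 < s := by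
      rcases Nat.lt_or_ge (r + 1) s with h | h
      · exact h
      · have : s = r + 1 := by omega
        subst this
        exact absurd hadd hnot
    refine le_trans (Set.ncard_le_ncard ?_ ?_) ((hn.2 s hs' hadd).trans
      (Set.ncard_le_ncard ?_ ?_))
    · rintro t ⟨h3, h4, h5⟩
      refine ⟨?_, h4, h5⟩
      rcases Nat.lt_or_ge (r + 1) t with h | h
      · exact h
      · have : t = r + 1 := by omega
        subst this
        exact absurd h5 hnot
    · exact (Set.finite_Iic s).subset fun t ht => ht.2.1
    · rintro t ⟨h3, h4, h5⟩
      exact ⟨by omega, h4, h5⟩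
    · exact (Set.finite_Iio s).subset fun t ht => ht.2.1

/-- If `λ` does not have a removable `i`-node together with an addable `i`-node in a
later ramp, then removing all normal `i`-nodes from `λ^rest` gives the
`p`-restrictisation of the partition obtained from `λ` by removing all its removable
`i`-nodes: `(λ^rest)^{▾i} = (λ^{▿i})^rest`. -/
theorem stmt6 (p : ℕ) (hp : p.Prime) (f : ℕ → ℕ) (hf : IsPartition f) (i : ZMod p)
    (hno : ¬ HasRemAddLater p f i)
    (g : ℕ → ℕ) (hg : IsRest p f g)
    (h : ℕ → ℕ) (hh : IsRest p (remRem p i f) h) :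
    remNorm p i g = h := by
  classical
  have hp2 : 2 ≤ p := hp.two_le
  obtain ⟨hgP, hgR, hgr⟩ := hg
  obtain ⟨hhP, hhR, hhr⟩ := hh
  have hmono := rowEnd_mono hgR
  -- removing data
  have hNP : ∀ r, NormalRow p g i r → remNorm p i g r + 1 = g r := by
    intro r hr
    have := ((remRes_iff hp2 _ _ _).1 hr.1).1
    simp only [remNorm, hr, if_true]
    omega
  have hNN : ∀ r, ¬ NormalRow p g i r → remNorm p i g r = g r := by
    intro r hr
    simp [remNorm, hr]
  have hRP : ∀ r, RemRes p f i r → remRem p i f r + 1 = f r := by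
    intro r hr
    have := ((remRes_iff hp2 _ _ _).1 hr).1
    simp only [remRem, hr, if_true]
    omega
  have hRN : ∀ r, ¬ RemRes p f i r → remRem p i f r = f r := by
    intro r hr
    simp [remRem, hr]
  -- no later
  have hno' : ∀ r s, RemRes p f i r → AddRes p f i s → rowEnd p f s < rowEnd p f r := by
    rintro r s ⟨c, hc, hci⟩ ⟨d, hd, hdi⟩
    by_contra hlt
    have hlt := not_lt.1 hlt
    apply hno
    refine ⟨r, c, s, d, hc, hci, hd, hdi, ?_⟩
    have hcast : ∀ r : ℕ, ((p : ℤ) - 1) * (r : ℤ) = (((p - 1) * r : ℕ) : ℤ) := by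
      intro r
      push_cast [Nat.cast_sub (show 1 ≤ p by omega)]; ring
    have h1 := hc.1
    have h2 := hd.1
    simp only [rampOf, hcast]
    simp only [rowEnd] at hlt
    omega
  apply unique_rest hp2 _ (rowEnd_mono hhR)
  · intro m
    rw [cum_eq hp2 hhr, cum_removed hp2 f _ _ hRP hRN, cum_removed hp2 g _ _ hNP hNN,
      cum_eq hp2 hgr]
    congr 1
    by_cases hm : (m : ZMod p) = i
    swap
    · have e1 : {r | NormalRow p g i r ∧ rowEnd p g r = m + 1} = ∅ := by
        ext r
        simp only [Set.mem_ofPred_eq, Set.mem_empty_iff_false, iff_false, not_and]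
        intro h1 h2
        have := ((remRes_iff hp2 _ _ _).1 h1.1).2
        rw [h2] at this
        push_cast at this
        exact hm (add_right_cancel this)
      have e2 : {r | RemRes p f i r ∧ rowEnd p f r = m + 1} = ∅ := by
        ext r
        simp only [Set.mem_ofPred_eq, Set.mem_empty_iff_false, iff_false, not_and]
        intro h1 h2
        have := ((remRes_iff hp2 _ _ _).1 h1).2
        rw [h2] at this
        push_cast at this
        exact hm (add_right_cancel this)
      rw [e1, e2]
    · -- invariance
      have hinv : ∀ m : ℕ, (m : ZMod p) = i →
          remR p i f m + addR p i g (m + p) = remR p i g m + addR p i f (m + p) := by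
        intro m hm
        have h1 := rem_add hp2 hf i m hm
        have h2 := rem_add hp2 hgP i m hm
        have h3 := cnt_eq hp2 hgr m
        have h4 := cnt_eq hp2 hgr (m + p - 1)
        rw [show m + p - 1 + 1 = m + p by omega] at h4
        omega
      have hzero : 0 < remR p i f m → ∀ m', m < m' → addR p i f m' = 0 := by
        intro hpos m' hm'
        obtain ⟨r, hr, hr2⟩ := Set.nonempty_of_ncard_ne_zero (Nat.pos_iff_ne_zero.1 hpos)
        unfold addR
        have : {r | AddRes p f i r ∧ rowEnd p f r = m'} = ∅ := by
          ext s
          simp only [Set.mem_ofPred_eq, Set.mem_empty_iff_false, iff_false, not_and]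
          intro hs hs2
          have := hno' r s hr hs
          omega
        rw [this]; simp
      have hmain : {r | NormalRow p g i r ∧ rowEnd p g r = m + 1} =
          {r | r ∈ {r | RemRes p g i r ∧ rowEnd p g r = m + 1} ∧ addR p i g (m + p) ≤
            Set.ncard {t | t ∈ {r | RemRes p g i r ∧ rowEnd p g r = m + 1} ∧ r < t}} := by
        ext r
        simp only [Set.mem_ofPred_eq]
        constructor
        · rintro ⟨h1, h2⟩
          exact ⟨⟨h1.1, h2⟩, of_normal hp2 hgR i m hm r h1 h2⟩
        · rintro ⟨⟨h1, h2⟩, h3⟩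
          refine ⟨normal_of hp2 hgR i m hm r h1 h2 h3 ?_, h2⟩
          have h4 : Set.ncard {t | (RemRes p g i t ∧ rowEnd p g t = m + 1) ∧ r < t} <
              remR p i g m := by
            apply Set.ncard_lt_ncard
            · refine ⟨fun t ht => ht.1, fun hsub => ?_⟩
              exact lt_irrefl _ (hsub (show r ∈ _ from ⟨h1, h2⟩)).2
            · exact fin_of_le hp2 g (m + 1) _ fun r hr => le_of_eq hr.2
          have h5 := hinv m hm
          have h6 : 0 < remR p i f m := by omega
          intro j
          have h7 := hinv (m + j * p) (by push_cast; simp [hm])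
          rw [show m + (j + 1) * p = m + j * p + p by ring]
          rw [hzero h6 (m + j * p + p) (by omega)] at h7
          omega
      rw [hmain, ncard_tail _ (fin_of_le hp2 g (m + 1) _ fun r hr => le_of_eq hr.2)]
      change remR p i g m - addR p i g (m + p) = remR p i f m
      have h5 := hinv m hm
      rcases Nat.eq_zero_or_pos (remR p i f m) with h0 | h0
      · omega
      · have := hzero h0 (m + p) (by omega)
        omega
  · apply monotone_nat_of_le_succ
    intro r
    have h1 := hmono (Nat.le_succ r)
    rw [Nat.succ_eq_add_one] at h1
    by_cases hn : NormalRow p g i (r + 1)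
    · have h2 := hNP _ hn
      by_cases hn' : NormalRow p g i r
      · have h3 := hNP _ hn'
        rw [rowEnd_succ] at h1 ⊢
        unfold rowEnd at h1 ⊢
        omega
      · have h3 := hNN _ hn'
        have h4 : rowEnd p g r ≠ rowEnd p g (r + 1) := fun he => hn' (normal_up hp2 i r he hn)
        rw [rowEnd_succ] at h1 h4 ⊢
        unfold rowEnd at h1 h4 ⊢
        omega
    · have h2 := hNN _ hn
      have h3 : remNorm p i g r ≤ g r := by
        simp only [remNorm]; omega
      rw [rowEnd_succ] at h1 ⊢
      unfold rowEnd at h1 ⊢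
      omega
end

section
/- If λ is a p-restricted partition, then the sum of the number of non-zero parts of λ and the number of non-zero parts of its Mullineux image m_p(λ) is not congruent to 1 modulo p. -/
/-- The conjugate partition, as a parts function; `conjFn f 0` is the number of
non-zero parts of `f`. -/
noncomputable def conjFn (f : ℕ → ℕ) : ℕ → ℕ :=
  fun c => Set.ncard {r : ℕ | c < f r}


namespace Mull

/-- Downward induction on rows. -/
lemma down {P : ℕ → Prop} (h0 : ∃ N, ∀ r, N ≤ r → P r) (h : ∀ r, P (r + 1) → P r) (r : ℕ) : P r := by
  obtain ⟨N, hN⟩ := h0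
  have key : ∀ k r, N ≤ r + k → P r := by
    intro k
    induction k with
    | zero => intro r hr; exact hN r (by omega)
    | succ k ih => intro r hr; exact h r (ih (r + 1) (by omega))
  exact key N r (by omega)

/-- A scan from the bottom row upwards. -/
lemma exists_scan {σ : Type} (S : ℕ → σ → σ) (τ : ℕ → σ) (N : ℕ)
    (h : ∀ r, N ≤ r → τ r = S r (τ (r + 1))) :
    ∃ y : ℕ → σ, (∃ N, ∀ r, N ≤ r → y r = τ r) ∧ ∀ r, y r = S r (y (r + 1)) := by
  have key : ∀ k, k ≤ N → ∃ y : ℕ → σ, (∀ r, N ≤ r → y r = τ r) ∧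
      ∀ r, N - k ≤ r → y r = S r (y (r + 1)) := by
    intro k
    induction k with
    | zero =>
      intro _
      exact ⟨τ, fun _ _ => rfl, fun r hr => h r (by omega)⟩
    | succ k ih =>
      intro hk
      obtain ⟨y, hy1, hy2⟩ := ih (by omega)
      refine ⟨fun r => if r = N - (k + 1) then S r (y (r + 1)) else y r, ?_, ?_⟩
      · intro r hr
        have : r ≠ N - (k + 1) := by omega
        simp [this, hy1 r hr]
      · intro r hr
        have h2 : r + 1 ≠ N - (k + 1) := by omega
        by_cases h1 : r = N - (k + 1)
        · simp only [if_pos h1, if_neg h2]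
        · simp only [if_neg h1, if_neg h2]
          exact hy2 r (by omega)
  obtain ⟨y, hy1, hy2⟩ := key N le_rfl
  exact ⟨y, ⟨N, hy1⟩, fun r => hy2 r (by omega)⟩

/-- The residue of the last node in row `r`. -/
def bt (p : ℕ) (f : ℕ → ℕ) (r : ℕ) : ZMod p := (f r : ZMod p) - (r : ZMod p) - 1

def EvZ (f : ℕ → ℕ) : Prop := ∃ N, ∀ n, N ≤ n → f n = 0

open Classical in
noncomputable def cstep (p : ℕ) (i b : ZMod p) (c : ℕ) : ℕ :=
  if b = i - 1 then c + 1 else if b = i then c - 1 else c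

open Classical in
noncomputable def ystep (p : ℕ) (b y : ZMod p) : ZMod p := if b = y then y + 1 else y

open Classical in
noncomputable def ctail (p : ℕ) (i : ZMod p) (r : ℕ) : ℕ := if -(r : ZMod p) = i then 1 else 0

lemma bt_zero {p : ℕ} {f : ℕ → ℕ} {r : ℕ} (h : f r = 0) : bt p f r = -((r + 1 : ℕ) : ZMod p) := by
  simp [bt, h]; ring

lemma ctail_step (p : ℕ) (hp : p.Prime) (f : ℕ → ℕ) (i : ZMod p) (r : ℕ) (h : f r = 0) :
    ctail p i r = cstep p i (bt p f r) (ctail p i (r + 1)) := by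
  have := Fact.mk hp
  have h1 : (1 : ZMod p) ≠ 0 := one_ne_zero
  rw [bt_zero h]
  unfold ctail cstep
  push_cast
  by_cases h2 : -(r : ZMod p) = i
  · have : -((r : ZMod p) + 1) = i - 1 := by rw [← h2]; ring
    have h3 : i - 1 ≠ i := by intro hh; apply h1; linear_combination -hh
    simp [h2, this, h3]
  · have : -((r : ZMod p) + 1) ≠ i - 1 := by
      intro hh; apply h2; linear_combination hh
    simp only [h2, this, if_false]
    split_ifs <;> simp

lemma ytail_step (p : ℕ) (f : ℕ → ℕ) (r : ℕ) (h : f r = 0) :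
    -(r : ZMod p) = ystep p (bt p f r) (-((r + 1 : ℕ) : ZMod p)) := by
  rw [bt_zero h]; simp [ystep]

lemma exC (p : ℕ) (hp : p.Prime) (f : ℕ → ℕ) (i : ZMod p) (hf : EvZ f) :
    ∃ c : ℕ → ℕ, (∃ N, ∀ r, N ≤ r → c r = ctail p i r) ∧
      ∀ r, c r = cstep p i (bt p f r) (c (r + 1)) := by
  obtain ⟨N, hN⟩ := hf
  exact exists_scan (fun r c => cstep p i (bt p f r) c) _ N
    (fun r hr => ctail_step p hp f i r (hN r hr))

lemma exY (p : ℕ) (f : ℕ → ℕ) (hf : EvZ f) :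
    ∃ y : ℕ → ZMod p, (∃ N, ∀ r, N ≤ r → y r = -(r : ZMod p)) ∧
      ∀ r, y r = ystep p (bt p f r) (y (r + 1)) := by
  obtain ⟨N, hN⟩ := hf
  exact exists_scan (fun r y => ystep p (bt p f r) y) (fun r => -(r : ZMod p)) N
    (fun r hr => ytail_step p f r (hN r hr))

open Classical in
noncomputable def C (p : ℕ) (f : ℕ → ℕ) (i : ZMod p) : ℕ → ℕ :=
  if h : ∃ c : ℕ → ℕ, (∃ N, ∀ r, N ≤ r → c r = ctail p i r) ∧
      ∀ r, c r = cstep p i (bt p f r) (c (r + 1)) then h.choose else fun _ => 0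

open Classical in
noncomputable def Y (p : ℕ) (f : ℕ → ℕ) : ℕ → ZMod p :=
  if h : ∃ y : ℕ → ZMod p, (∃ N, ∀ r, N ≤ r → y r = -(r : ZMod p)) ∧
      ∀ r, y r = ystep p (bt p f r) (y (r + 1)) then h.choose else fun _ => 0

lemma C_spec {p : ℕ} (hp : p.Prime) {f : ℕ → ℕ} (i : ZMod p) (hf : EvZ f) :
    (∃ N, ∀ r, N ≤ r → C p f i r = ctail p i r) ∧
      ∀ r, C p f i r = cstep p i (bt p f r) (C p f i (r + 1)) := by
  have h := exC p hp f i hf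
  unfold C
  rw [dif_pos h]
  exact h.choose_spec

lemma Y_spec {p : ℕ} {f : ℕ → ℕ} (hf : EvZ f) :
    (∃ N, ∀ r, N ≤ r → Y p f r = -(r : ZMod p)) ∧
      ∀ r, Y p f r = ystep p (bt p f r) (Y p f (r + 1)) := by
  have h := exY p f hf
  unfold Y
  rw [dif_pos h]
  exact h.choose_spec

lemma C_tail {p : ℕ} (hp : p.Prime) {f : ℕ → ℕ} (i : ZMod p) {a : ℕ} (ha : ∀ r, a ≤ r → f r = 0)
    (r : ℕ) (hr : a ≤ r) : C p f i r = ctail p i r := by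
  obtain ⟨⟨N, hN⟩, hs⟩ := C_spec hp i (f := f) ⟨a, ha⟩
  revert hr
  refine down (P := fun r => a ≤ r → C p f i r = ctail p i r) ⟨N, fun r h _ => hN r h⟩ ?_ r
  intro r ih hr
  rw [hs r, ih (by omega), ctail_step p hp f i r (ha r hr)]

lemma Y_tail {p : ℕ} {f : ℕ → ℕ} {a : ℕ} (ha : ∀ r, a ≤ r → f r = 0)
    (r : ℕ) (hr : a ≤ r) : Y p f r = -(r : ZMod p) := by
  obtain ⟨⟨N, hN⟩, hs⟩ := Y_spec (p := p) (f := f) ⟨a, ha⟩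
  revert hr
  refine down (P := fun r => a ≤ r → Y p f r = -(r : ZMod p)) ⟨N, fun r h _ => hN r h⟩ ?_ r
  intro r ih hr
  rw [hs r, ih (by omega), ← ytail_step p f r (ha r hr)]

def Fire (p : ℕ) (f : ℕ → ℕ) (i : ZMod p) (r : ℕ) : Prop := bt p f r = i ∧ C p f i (r + 1) = 0

def Keep (p : ℕ) (f : ℕ → ℕ) (r : ℕ) : Prop := bt p f r = Y p f (r + 1)

open Classical in
noncomputable def E (p : ℕ) (i : ZMod p) (f : ℕ → ℕ) : ℕ → ℕ :=
  fun r => f r - (if Fire p f i r then 1 else 0)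

open Classical in
noncomputable def J (p : ℕ) (f : ℕ → ℕ) : ℕ → ℕ :=
  fun r => f r - (if Keep p f r then 0 else 1)

/-- zeros from row `r` on, for a partition. -/
lemma zeros {f : ℕ → ℕ} (hf : IsPartition f) {r : ℕ} (h : f r = 0) : ∀ s, r ≤ s → f s = 0 := by
  intro s hs
  have := hf.1 r s hs
  omega

lemma fire_pos {p : ℕ} (hp : p.Prime) {f : ℕ → ℕ} (hf : IsPartition f) {i : ZMod p} {r : ℕ}
    (h : Fire p f i r) : 0 < f r := by
  by_contra h0
  have h0 : f r = 0 := by omega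
  obtain ⟨h1, h2⟩ := h
  rw [C_tail hp i (zeros hf h0) (r + 1) (by omega), ctail] at h2
  rw [bt_zero h0] at h1
  rw [if_pos h1] at h2
  omega

lemma notkeep_pos {p : ℕ} {f : ℕ → ℕ} (hf : IsPartition f) {r : ℕ}
    (h : ¬ Keep p f r) : 0 < f r := by
  by_contra h0
  have h0 : f r = 0 := by omega
  apply h
  rw [Keep, Y_tail (zeros hf h0) (r + 1) (by omega), bt_zero h0]

lemma fire_lt {p : ℕ} (hp : p.Prime) {f : ℕ → ℕ} (hf : IsPartition f) {i : ZMod p} {r : ℕ}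
    (h : Fire p f i r) : f (r + 1) < f r := by
  have h1 := hf.1 r (r + 1) (by omega)
  by_contra h2
  have h3 : f (r + 1) = f r := by omega
  obtain ⟨h4, h5⟩ := h
  rw [(C_spec hp i hf.2).2 (r + 1)] at h5
  have : bt p f (r + 1) = i - 1 := by
    rw [← h4]; simp only [bt, h3]; push_cast; ring
  simp [cstep, this] at h5

lemma bt_wrap {p : ℕ} {f : ℕ → ℕ} {r : ℕ} (h : f r + 1 = f (r + 1) + p) :
    bt p f r = bt p f (r + 1) := by
  have : ((f r + 1 : ℕ) : ZMod p) = ((f (r + 1) + p : ℕ) : ZMod p) := by rw [h]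
  push_cast at this
  simp only [CharP.cast_eq_zero, add_zero] at this
  simp only [bt]
  push_cast
  linear_combination this

lemma E_le {p : ℕ} (i : ZMod p) (f : ℕ → ℕ) : E p i f ≤ f := fun r => Nat.sub_le _ _
lemma J_le {p : ℕ} (f : ℕ → ℕ) : J p f ≤ f := fun r => Nat.sub_le _ _

lemma isPart_of {f : ℕ → ℕ} (h : ∀ r, f (r + 1) ≤ f r) (h2 : EvZ f) : IsPartition f :=
  ⟨fun m n hmn => antitone_nat_of_succ_le h hmn, h2⟩

lemma evz_le {f g : ℕ → ℕ} (hf : EvZ f) (h : g ≤ f) : EvZ g := by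
  obtain ⟨N, hN⟩ := hf
  refine ⟨N, fun n hn => ?_⟩
  have h1 : g n ≤ f n := h n
  have := hN n hn
  omega

lemma E_part {p : ℕ} (hp : p.Prime) {f : ℕ → ℕ} (hf : IsPartition f) (i : ZMod p) :
    IsPartition (E p i f) := by
  refine isPart_of (fun r => ?_) (evz_le hf.2 (E_le i f))
  have h1 := hf.1 r (r + 1) (by omega)
  simp only [E]
  by_cases h : Fire p f i r
  · have := fire_lt hp hf h
    rw [if_pos h]; omega
  · rw [if_neg h]; omega

lemma E_restr {p : ℕ} (hp : p.Prime) {f : ℕ → ℕ} (hf : IsPartition f) (hr : PRestricted p f)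
    (i : ZMod p) : PRestricted p (E p i f) := by
  have := Fact.mk hp
  intro r
  have h1 := hr r
  simp only [E]
  by_cases h2 : Fire p f i (r + 1)
  · have hpos := fire_pos hp hf h2
    by_cases h3 : Fire p f i r
    · rw [if_pos h2, if_pos h3]; have := hp.two_le; omega
    · rw [if_pos h2, if_neg h3]
      by_contra hc
      have h4 : f r + 1 = f (r + 1) + p := by omega
      apply h3
      refine ⟨by rw [bt_wrap h4]; exact h2.1, ?_⟩
      rw [(C_spec hp i hf.2).2 (r + 1), h2.1, h2.2]
      have h5 : i ≠ i - 1 := by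
        intro hh; apply one_ne_zero (α := ZMod p); linear_combination hh
      simp [cstep, h5]
  · rw [if_neg h2]; omega

lemma J_part {p : ℕ} {f : ℕ → ℕ} (hf : IsPartition f) :
    IsPartition (J p f) := by
  refine isPart_of (fun r => ?_) (evz_le hf.2 (J_le f))
  have h1 := hf.1 r (r + 1) (by omega)
  simp only [J]
  by_cases h : Keep p f (r + 1)
  · by_cases h2 : Keep p f r
    · rw [if_pos h, if_pos h2]; omega
    · rw [if_pos h, if_neg h2]
      by_contra hc
      have h3 : f (r + 1) = f r := by omega
      apply h2
      have h' : bt p f (r + 1) = Y p f (r + 1 + 1) := h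
      rw [Keep, (Y_spec hf.2).2 (r + 1), ystep, if_pos h', ← h']
      simp only [bt, h3]; push_cast; ring
  · have := notkeep_pos hf h
    rw [if_neg h]; split_ifs <;> omega

lemma J_restr {p : ℕ} {f : ℕ → ℕ} (hf : IsPartition f) (hr : PRestricted p f) :
    PRestricted p (J p f) := by
  intro r
  have h1 := hr r
  have h1' := hf.1 r (r + 1) (by omega)
  simp only [J]
  by_cases h : Keep p f (r + 1)
  · rw [if_pos h]; omega
  · have hpos := notkeep_pos hf h
    rw [if_neg h]
    by_cases h2 : Keep p f r
    · rw [if_pos h2]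
      by_contra hc
      have h4 : f r + 1 = f (r + 1) + p := by omega
      apply h
      have h' : ¬ bt p f (r + 1) = Y p f (r + 1 + 1) := h
      rw [Keep, (Y_spec hf.2).2 (r + 1), ystep, if_neg h', bt_wrap h4] at h2
      exact h2
    · rw [if_neg h2]; omega

/-- The bisimulation relation. -/
def Rel (p : ℕ) (i : ZMod p) (c : ℕ) (y1 y2 : ZMod p) (c2 : ℕ) : Prop :=
  (y1 = y2 ∧ y1 ≠ i ∧ y1 ≠ i - 1 ∧ c2 = c) ∨ (y1 = i - 1 ∧ y2 = i - 1 ∧ c2 = c + 1) ∨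
  (y1 = i ∧ y2 = i ∧ c = c2 + 1) ∨ (y1 = i ∧ y2 = i - 1 ∧ c = 0 ∧ c2 = 0)

open Classical in
lemma rel_step {p : ℕ} (hp : p.Prime) (i : ZMod p) (c c2 : ℕ) (y1 y2 b b1 g : ZMod p)
    (hb1 : b1 = if b = i ∧ c = 0 then b - 1 else b)
    (hg : g = if b = y2 then b + 1 else b)
    (h : Rel p i c y1 y2 c2) :
    ((if b = i ∧ c = 0 then 1 else 0) + (if b1 = y1 then 0 else 1) =
      (if b = y2 then 0 else 1) + (if g = i ∧ c2 = 0 then 1 else 0)) ∧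
    Rel p i (cstep p i b c) (ystep p b1 y1) (ystep p b y2) (cstep p i g c2) := by
  have := Fact.mk hp
  have h1 : (1 : ZMod p) ≠ 0 := one_ne_zero
  have h2 : i ≠ i - 1 := by intro hh; apply h1; linear_combination hh
  unfold Rel cstep ystep at *
  rcases h with h | h | h | h
  all_goals
    constructor
    · grind
    · by_cases e1 : b = i
      · by_cases e2 : c = 0 <;> by_cases e3 : b = y2 <;> grind
      · by_cases e2 : b = i - 1
        · by_cases e3 : b = y2 <;> grind
        · by_cases e3 : b = y2 <;> grind

end Mull

namespace Mull

open Classical in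
lemma bt_E {p : ℕ} (hp : p.Prime) {f : ℕ → ℕ} (hf : IsPartition f) (i : ZMod p) (r : ℕ) :
    bt p (E p i f) r = if bt p f r = i ∧ C p f i (r + 1) = 0 then bt p f r - 1 else bt p f r := by
  by_cases h : Fire p f i r
  · have h1 := fire_pos hp hf h
    have h2 : E p i f r + 1 = f r := by simp only [E, if_pos h]; omega
    rw [if_pos (show bt p f r = i ∧ C p f i (r + 1) = 0 from h)]
    simp only [bt, ← h2]; push_cast; ring
  · rw [if_neg (show ¬ (bt p f r = i ∧ C p f i (r + 1) = 0) from h)]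
    simp [bt, E, if_neg h]

open Classical in
lemma bt_J {p : ℕ} {f : ℕ → ℕ} (hf : IsPartition f) (r : ℕ) :
    bt p (J p f) r + 1 = if bt p f r = Y p f (r + 1) then bt p f r + 1 else bt p f r := by
  by_cases h : Keep p f r
  · rw [if_pos (show bt p f r = Y p f (r + 1) from h)]
    simp [bt, J, if_pos h]
  · have h1 := notkeep_pos hf h
    have h2 : J p f r + 1 = f r := by simp only [J, if_neg h]; omega
    rw [if_neg (show ¬ bt p f r = Y p f (r + 1) from h)]
    simp only [bt, ← h2]; push_cast; ring

lemma cstep_shift {p : ℕ} (i b : ZMod p) (c : ℕ) : cstep p (i - 1) b c = cstep p i (b + 1) c := by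
  have h1 : b = i - 1 - 1 ↔ b + 1 = i - 1 :=
    ⟨fun h => by rw [h]; ring, fun h => by rw [← h]; ring⟩
  have h2 : b = i - 1 ↔ b + 1 = i := ⟨fun h => by rw [h]; ring, fun h => by rw [← h]; ring⟩
  simp only [cstep, h1, h2]

lemma rel_all {p : ℕ} (hp : p.Prime) {f : ℕ → ℕ} (hf : IsPartition f) (i : ZMod p) (r : ℕ) :
    Rel p i (C p f i r) (Y p (E p i f) r) (Y p f r) (C p (J p f) (i - 1) r) := by
  have := Fact.mk hp
  have hE := (E_part hp hf i).2
  have hJ := (J_part (p := p) hf).2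
  refine down (P := fun r => Rel p i (C p f i r) (Y p (E p i f) r) (Y p f r)
    (C p (J p f) (i - 1) r)) ?_ ?_ r
  · obtain ⟨N, hN⟩ := hf.2
    refine ⟨N, fun r hr => ?_⟩
    have h1 : ∀ r, N ≤ r → E p i f r = 0 := fun r hr => by
      have : E p i f r ≤ f r := E_le i f r
      have := hN r hr
      omega
    have h2 : ∀ r, N ≤ r → J p f r = 0 := fun r hr => by
      have : J p f r ≤ f r := J_le f r
      have := hN r hr
      omega
    rw [C_tail hp i hN r hr, C_tail hp (i - 1) h2 r hr, Y_tail hN r hr, Y_tail h1 r hr]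
    have h0 : (1 : ZMod p) ≠ 0 := one_ne_zero
    have h3 : i ≠ i - 1 := by intro hh; apply h0; linear_combination hh
    unfold Rel ctail
    by_cases e1 : -(r : ZMod p) = i
    · simp [e1, h3]
    · by_cases e2 : -(r : ZMod p) = i - 1
      · simp [e2, h3.symm]
      · simp [e1, e2]
  · intro r ih
    rw [(C_spec hp i hf.2).2 r, (Y_spec hE).2 r, (Y_spec hf.2).2 r, (C_spec hp (i - 1) hJ).2 r,
      cstep_shift]
    exact (rel_step hp i _ _ _ _ _ _ _ (bt_E hp hf i r) (bt_J hf r) ih).2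

lemma J_E {p : ℕ} (hp : p.Prime) {f : ℕ → ℕ} (hf : IsPartition f) (i : ZMod p) :
    J p (E p i f) = E p (i - 1) (J p f) := by
  classical
  funext r
  have h := (rel_step hp i _ _ _ _ _ _ _ (bt_E hp hf i r) (bt_J hf r)
    (rel_all hp hf i (r + 1))).1
  have h3 : bt p (J p f) r = i - 1 ↔ bt p (J p f) r + 1 = i :=
    ⟨fun h => by rw [h]; ring, fun h => by rw [← h]; ring⟩
  have e1 : J p (E p i f) r = f r - ((if Fire p f i r then 1 else 0) +
    (if Keep p (E p i f) r then 0 else 1)) := by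
    rw [← Nat.sub_sub]; rfl
  have e2 : E p (i - 1) (J p f) r = f r - ((if Keep p f r then 0 else 1) +
    (if Fire p (J p f) (i - 1) r then 1 else 0)) := by
    rw [← Nat.sub_sub]; rfl
  rw [e1, e2]
  unfold Fire Keep
  rw [h3]
  congr 1
  convert h

end Mull

namespace Mull

lemma addRes_iff {p : ℕ} {f : ℕ → ℕ} {i : ZMod p} {r : ℕ} :
    AddRes p f i r ↔ bt p f r = i - 1 ∧ (r = 0 ∨ f r < f (r - 1)) := by
  unfold AddRes Addable res bt
  constructor
  · rintro ⟨c, ⟨rfl, h⟩, rfl⟩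
    exact ⟨rfl, h⟩
  · rintro ⟨h1, h2⟩
    exact ⟨f r, ⟨rfl, h2⟩, by linear_combination h1⟩

lemma remRes_iff {p : ℕ} {f : ℕ → ℕ} {i : ZMod p} {r : ℕ} :
    RemRes p f i r ↔ bt p f r = i ∧ f (r + 1) < f r := by
  unfold RemRes Removable res bt
  constructor
  · rintro ⟨c, ⟨h0, h⟩, rfl⟩
    refine ⟨?_, h⟩
    rw [← h0]; push_cast; ring
  · rintro ⟨h1, h2⟩
    refine ⟨f r - 1, ⟨by omega, h2⟩, ?_⟩
    rw [← h1, Nat.cast_sub (by omega)]; push_cast; ring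

open Classical in
noncomputable def nA (A : ℕ → Prop) (r s : ℕ) : ℕ := ((Finset.Icc r s).filter A).card

open Classical in
noncomputable def nR (A : ℕ → Prop) (r s : ℕ) : ℕ := ((Finset.Ico r s).filter A).card

open Classical in
lemma nA_step (A : ℕ → Prop) {r s : ℕ} (h : r ≤ s) :
    nA A r s = nA A (r + 1) s + if A r then 1 else 0 := by
  unfold nA
  have : Finset.Icc r s = insert r (Finset.Icc (r + 1) s) := by
    ext x; simp only [Finset.mem_Icc, Finset.mem_insert]; omega
  rw [this, Finset.filter_insert]
  split_ifs with h1
  · rw [Finset.card_insert_of_notMem (by simp)]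
  · rfl

open Classical in
lemma nR_step (A : ℕ → Prop) {r s : ℕ} (h : r < s) :
    nR A r s = nR A (r + 1) s + if A r then 1 else 0 := by
  unfold nR
  have : Finset.Ico r s = insert r (Finset.Ico (r + 1) s) := by
    ext x; simp only [Finset.mem_Ico, Finset.mem_insert]; omega
  rw [this, Finset.filter_insert]
  split_ifs with h1
  · rw [Finset.card_insert_of_notMem (by simp)]
  · rfl

lemma nA_ncard (A : ℕ → Prop) (r s : ℕ) :
    Set.ncard {t : ℕ | r < t ∧ t ≤ s ∧ A t} = nA A (r + 1) s := by
  classical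
  unfold nA
  rw [← Set.ncard_coe_finset]
  congr 1
  ext t
  simp [Nat.succ_le_iff, and_assoc]

lemma nR_ncard (A : ℕ → Prop) (r s : ℕ) :
    Set.ncard {t : ℕ | r < t ∧ t < s ∧ A t} = nR A (r + 1) s := by
  classical
  unfold nR
  rw [← Set.ncard_coe_finset]
  congr 1
  ext t
  simp [Nat.succ_le_iff, and_assoc]

open Classical in
lemma scan_iff (A R : ℕ → Prop) (hAR : ∀ r, A r → ¬ R r) (N : ℕ) (hA : ∀ r, N ≤ r → ¬ A r)
    (c : ℕ → ℕ) (hc0 : ∃ N, ∀ r, N ≤ r → c r = 0)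
    (hc : ∀ r, c r = if A r then c (r + 1) + 1 else if R r then c (r + 1) - 1 else c (r + 1))
    (r : ℕ) : ∀ k, c r ≤ k ↔ ∀ s, r ≤ s → A s → nA A r s ≤ nR R r s + k := by
  refine down (P := fun r => ∀ k, c r ≤ k ↔ ∀ s, r ≤ s → A s → nA A r s ≤ nR R r s + k) ?_ ?_ r
  · obtain ⟨N', hN'⟩ := hc0
    refine ⟨N + N', fun r hr k => ?_⟩
    rw [hN' r (by omega)]
    simp only [zero_le, true_iff]
    intro s hs h
    exact absurd h (hA s (by omega))
  · intro r ih k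
    rw [hc r]
    have hself : nA A r r = if A r then 1 else 0 := by
      rw [nA_step A le_rfl]; simp [nA]
    by_cases h1 : A r
    · have h2 := hAR r h1
      rw [if_pos h1]
      rw [if_pos h1] at hself
      rcases k with _ | k
      · constructor
        · intro h; omega
        · intro h
          have := h r le_rfl h1
          rw [hself] at this
          simp [nR] at this
      · rw [Nat.add_le_add_iff_right, ih k]
        constructor
        · intro h s hs hA
          rcases Nat.eq_or_lt_of_le hs with rfl | hlt
          · omega
          · have := h s hlt hA
            rw [nA_step A hs, nR_step R hlt, if_pos h1, if_neg h2]; omega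
        · intro h s hs hA
          have := h s (by omega) hA
          rw [nA_step A (by omega), nR_step R (by omega), if_pos h1, if_neg h2] at this; omega
    · rw [if_neg h1]
      by_cases h2 : R r
      · rw [if_pos h2, Nat.sub_le_iff_le_add, ih (k + 1)]
        constructor
        · intro h s hs hA
          rcases Nat.eq_or_lt_of_le hs with rfl | hlt
          · exact absurd hA h1
          · have := h s hlt hA
            rw [nA_step A hs, nR_step R hlt, if_neg h1, if_pos h2]; omega
        · intro h s hs hA
          have := h s (by omega) hA
          rw [nA_step A (by omega), nR_step R (by omega), if_neg h1, if_pos h2] at this; omega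
      · rw [if_neg h2, ih k]
        constructor
        · intro h s hs hA
          rcases Nat.eq_or_lt_of_le hs with rfl | hlt
          · exact absurd hA h1
          · have := h s hlt hA
            rw [nA_step A hs, nR_step R hlt, if_neg h1, if_neg h2]; omega
        · intro h s hs hA
          have := h s (by omega) hA
          rw [nA_step A (by omega), nR_step R (by omega), if_neg h1, if_neg h2] at this; omega

open Classical in
lemma C_cact {p : ℕ} (hp : p.Prime) {f : ℕ → ℕ} (hf : IsPartition f) (i : ZMod p)
    (c : ℕ → ℕ) (hc0 : ∃ N, ∀ r, N ≤ r → c r = 0)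
    (hc : ∀ r, c r = if AddRes p f i r then c (r + 1) + 1 else if RemRes p f i r
      then c (r + 1) - 1 else c (r + 1)) (r : ℕ) :
    C p f i r = c r + if bt p f r = i - 1 ∧ ¬ (r = 0 ∨ f r < f (r - 1)) then 1 else 0 := by
  have := Fact.mk hp
  have h0 : (1 : ZMod p) ≠ 0 := one_ne_zero
  have h3 : i ≠ i - 1 := by intro hh; apply h0; linear_combination hh
  refine down (P := fun r => C p f i r = c r +
    if bt p f r = i - 1 ∧ ¬ (r = 0 ∨ f r < f (r - 1)) then 1 else 0) ?_ ?_ r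
  · obtain ⟨N', hN'⟩ := hc0
    obtain ⟨N, hN⟩ := hf.2
    refine ⟨N + N' + 1, fun r hr => ?_⟩
    rw [hN' r (by omega), C_tail hp i hN r (by omega), bt_zero (hN r (by omega)), ctail]
    have e1 : ¬ (r = 0 ∨ f r < f (r - 1)) := by
      rw [hN (r - 1) (by omega)]; omega
    have e2 : -(r : ZMod p) = i ↔ -((r + 1 : ℕ) : ZMod p) = i - 1 := by
      push_cast
      exact ⟨fun h => by rw [← h]; ring, fun h => by linear_combination h⟩
    simp only [e1, e2, not_false_eq_true, and_true, zero_add]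
  · intro r ih
    rw [(C_spec hp i hf.2).2 r, ih, hc r, addRes_iff, remRes_iff, cstep]
    have hmono := hf.1 r (r + 1) (by omega)
    have hb : f (r + 1) = f r → bt p f (r + 1) = bt p f r - 1 := by
      intro h; simp only [bt, h]; push_cast; ring
    simp only [Nat.add_sub_cancel, Nat.add_eq_zero_iff, one_ne_zero, and_false, false_or]
    by_cases e1 : bt p f r = i - 1
    · have e2 : ¬ (bt p f (r + 1) = i - 1 ∧ ¬ f (r + 1) < f r) := by
        rintro ⟨h1, h2⟩
        rw [hb (by omega), e1] at h1
        apply h0; linear_combination -h1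
      rw [if_neg e2]
      by_cases e3 : r = 0 ∨ f r < f (r - 1)
      · simp [e1, e3]
      · simp [e1, e3, h3.symm]
    · by_cases e2 : bt p f r = i
      · by_cases e3 : f (r + 1) < f r
        · simp [e2, h3, e3]
        · have := hb (by omega)
          rw [e2] at this
          simp [e2, h3, e3, this]
      · have e3 : ¬ (bt p f (r + 1) = i - 1 ∧ ¬ f (r + 1) < f r) := by
          rintro ⟨h1, h2⟩
          rw [hb (by omega)] at h1
          apply e2; linear_combination h1
        rw [if_neg e3]
        simp [e1, e2]

lemma normal_iff {p : ℕ} (hp : p.Prime) {f : ℕ → ℕ} (hf : IsPartition f) (i : ZMod p) (r : ℕ) :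
    NormalRow p f i r ↔ Fire p f i r := by
  classical
  have := Fact.mk hp
  have h0 : (1 : ZMod p) ≠ 0 := one_ne_zero
  obtain ⟨N, hN⟩ := hf.2
  have hA : ∀ r, N + 1 ≤ r → ¬ AddRes p f i r := by
    intro r hr h
    rw [addRes_iff, hN (r - 1) (by omega)] at h
    omega
  have hR : ∀ r, N + 1 ≤ r → ¬ RemRes p f i r := by
    intro r hr h
    rw [remRes_iff, hN r (by omega)] at h
    omega
  have hAR : ∀ r, AddRes p f i r → ¬ RemRes p f i r := by
    intro r h1 h2
    rw [addRes_iff] at h1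
    rw [remRes_iff] at h2
    have h3 := h1.1
    rw [h2.1] at h3
    apply h0; linear_combination h3
  obtain ⟨c, hc0, hc⟩ := exists_scan (fun r c => if AddRes p f i r then c + 1 else if RemRes p f i r
      then c - 1 else c) (fun _ => 0) (N + 1) (by
        intro r hr
        simp [hA r hr])
  have key := scan_iff _ _ hAR (N + 1) hA c hc0 hc (r + 1) 0
  have hC := C_cact hp hf i c hc0 hc (r + 1)
  have hn : NormalRow p f i r ↔ RemRes p f i r ∧ c (r + 1) = 0 := by
    unfold NormalRow
    simp only [nA_ncard, nR_ncard]
    rw [← Nat.le_zero, key]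
    rfl
  have hF : Fire p f i r → RemRes p f i r := by
    intro h
    rw [remRes_iff]
    exact ⟨h.1, fire_lt hp hf h⟩
  rw [hn]
  constructor
  · rintro ⟨h1, h2⟩
    rw [remRes_iff] at h1
    refine ⟨h1.1, ?_⟩
    rw [hC, h2, if_neg]
    simp [h1.2]
  · intro h
    refine ⟨hF h, ?_⟩
    have := h.2
    omega

lemma remNorm_eq {p : ℕ} (hp : p.Prime) {f : ℕ → ℕ} (hf : IsPartition f) (i : ZMod p) :
    remNorm p i f = E p i f := by
  funext r
  simp only [remNorm, E]
  by_cases h : Fire p f i r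
  · rw [if_pos h, if_pos ((normal_iff hp hf i r).2 h)]
  · rw [if_neg h, if_neg (fun h' => h ((normal_iff hp hf i r).1 h'))]

end Mull

namespace Mull

lemma rows_unique {f : ℕ → ℕ} {k a : ℕ} (h : ∀ r, k < f r ↔ r < a) : conjFn f k = a := by
  unfold conjFn
  have : {r : ℕ | k < f r} = ↑(Finset.range a) := by
    ext r; simp [h r]
  rw [this, Set.ncard_coe_finset, Finset.card_range]

lemma rows {f : ℕ → ℕ} (hf : IsPartition f) (k : ℕ) : ∀ r, k < f r ↔ r < conjFn f k := by
  classical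
  obtain ⟨N, hN⟩ := hf.2
  have hex : ∃ r, f r ≤ k := ⟨N, by rw [hN N le_rfl]; omega⟩
  have h : ∀ r, k < f r ↔ r < Nat.find hex := by
    intro r
    constructor
    · intro h
      by_contra hc
      have h1 := hf.1 _ r (not_lt.1 hc)
      have h2 := Nat.find_spec hex
      omega
    · intro h
      have := Nat.find_min hex h
      omega
  rw [rows_unique h]
  exact h

lemma ind {p : ℕ} {P : (ℕ → ℕ) → Prop}
    (h : ∀ f, IsPartition f → PRestricted p f →
      (∀ g, IsPartition g → PRestricted p g → g ≤ f → g ≠ f → P g) → P f) :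
    ∀ f, IsPartition f → PRestricted p f → P f := by
  intro f hf hr
  obtain ⟨N, hN⟩ := hf.2
  have key : ∀ n, ∀ f, IsPartition f → PRestricted p f → (∀ r, N ≤ r → f r = 0) →
      ∑ r ∈ Finset.range N, f r = n → P f := by
    intro n
    induction n using Nat.strong_induction_on with
    | _ n ih =>
      intro f hf hr hN hn
      apply h f hf hr
      intro g hg hgr hle hne
      have hgN : ∀ r, N ≤ r → g r = 0 := fun r hr => by
        have h1 : g r ≤ f r := hle r
        have := hN r hr
        omega
      refine ih _ ?_ g hg hgr hgN rfl
      rw [← hn]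
      apply Finset.sum_lt_sum (fun r _ => hle r)
      by_contra hc
      push Not at hc
      apply hne
      funext r
      by_cases h1 : r < N
      · exact le_antisymm (hle r) (hc r (Finset.mem_range.2 h1))
      · rw [hN r (by omega), hgN r (by omega)]
  exact key _ f hf hr hN rfl

lemma a_pos {f : ℕ → ℕ} (hf : IsPartition f) (h : f ≠ fun _ => 0) : 0 < conjFn f 0 := by
  by_contra hc
  apply h
  funext r
  have := rows hf 0 r
  omega

lemma bot_pos {f : ℕ → ℕ} (hf : IsPartition f) (h : f ≠ fun _ => 0) : 0 < f (conjFn f 0 - 1) := by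
  have := a_pos hf h
  rw [rows hf 0]; omega

lemma bot_lt {p : ℕ} {f : ℕ → ℕ} (hf : IsPartition f) (hr : PRestricted p f)
    (h : f ≠ fun _ => 0) : f (conjFn f 0 - 1) < p := by
  have h1 := a_pos hf h
  have h2 := hr (conjFn f 0 - 1)
  have h3 := rows hf 0 (conjFn f 0 - 1 + 1)
  omega

lemma a_tail {f : ℕ → ℕ} (hf : IsPartition f) : ∀ r, conjFn f 0 ≤ r → f r = 0 := by
  intro r h
  have := rows hf 0 r
  omega

lemma cast_ne {p n : ℕ} (h1 : 0 < n) (h2 : n < p) : (n : ZMod p) ≠ 0 := by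
  intro h
  rw [ZMod.natCast_eq_zero_iff] at h
  exact absurd (Nat.le_of_dvd h1 h) (by omega)

lemma bt_bot {p : ℕ} {f : ℕ → ℕ} (hf : IsPartition f) (h : f ≠ fun _ => 0) :
    bt p f (conjFn f 0 - 1) = (f (conjFn f 0 - 1) : ZMod p) - (conjFn f 0 : ZMod p) := by
  have h1 := a_pos hf h
  rw [bt, Nat.cast_sub h1]
  push_cast; ring

lemma bot_not_keep {p : ℕ} {f : ℕ → ℕ} (hf : IsPartition f) (hr : PRestricted p f)
    (h : f ≠ fun _ => 0) : ¬ Keep p f (conjFn f 0 - 1) := by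
  intro hk
  have h1 := a_pos hf h
  unfold Keep at hk
  rw [Nat.sub_add_cancel h1, Y_tail (a_tail hf) _ le_rfl, bt_bot hf h] at hk
  apply cast_ne (bot_pos hf h) (bot_lt hf hr h)
  linear_combination hk

lemma bot_fire {p : ℕ} (hp : p.Prime) {f : ℕ → ℕ} (hf : IsPartition f) (hr : PRestricted p f)
    (h : f ≠ fun _ => 0) : Fire p f (bt p f (conjFn f 0 - 1)) (conjFn f 0 - 1) := by
  have h1 := a_pos hf h
  refine ⟨rfl, ?_⟩
  rw [Nat.sub_add_cancel h1, C_tail hp _ (a_tail hf) _ le_rfl, ctail, if_neg]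
  rw [bt_bot hf h]
  intro hk
  apply cast_ne (bot_pos hf h) (bot_lt hf hr h)
  linear_combination -hk

lemma J_bot {p : ℕ} {f : ℕ → ℕ} (hf : IsPartition f) (hr : PRestricted p f)
    (h : f ≠ fun _ => 0) : J p f (conjFn f 0 - 1) = f (conjFn f 0 - 1) - 1 := by
  simp only [J, if_neg (bot_not_keep hf hr h)]

lemma J_ne {p : ℕ} {f : ℕ → ℕ} (hf : IsPartition f) (hr : PRestricted p f)
    (h : f ≠ fun _ => 0) : J p f ≠ f := by
  intro he
  have h1 := J_bot (p := p) hf hr h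
  have h2 := bot_pos hf h
  rw [he] at h1
  omega

lemma E_ne {p : ℕ} (hp : p.Prime) {f : ℕ → ℕ} (hf : IsPartition f) {i : ZMod p} {r : ℕ}
    (h : Fire p f i r) : E p i f ≠ f := by
  intro he
  have h1 := fire_pos hp hf h
  have h2 : E p i f r = f r - 1 := by simp only [E, if_pos h]
  rw [he] at h2
  omega

/-- The number of `J`-iterations needed to reach the empty partition. -/
noncomputable def H (p : ℕ) (f : ℕ → ℕ) : ℕ := sInf {n | (J p)^[n] f = fun _ => 0}

lemma H_zero (p : ℕ) : H p (fun _ => 0) = 0 := by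
  unfold H
  exact Nat.sInf_eq_zero.2 (Or.inl rfl)

lemma H_ex {p : ℕ} : ∀ f, IsPartition f → PRestricted p f → ∃ n, (J p)^[n] f = fun _ => 0 := by
  apply ind
  intro f hf hr ih
  by_cases h : f = fun _ => 0
  · exact ⟨0, h⟩
  · obtain ⟨n, hn⟩ := ih (J p f) (J_part hf) (J_restr hf hr) (J_le f) (J_ne hf hr h)
    exact ⟨n + 1, hn⟩

lemma H_step {p : ℕ} {f : ℕ → ℕ} (hf : IsPartition f) (hr : PRestricted p f)
    (h : f ≠ fun _ => 0) : H p f = H p (J p f) + 1 := by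
  classical
  have h1 : ∃ n, n ∈ {n | (J p)^[n] f = fun _ => 0} := H_ex f hf hr
  have h2 : ∃ n, n ∈ {n | (J p)^[n] (J p f) = fun _ => 0} := H_ex _ (J_part hf) (J_restr hf hr)
  unfold H
  rw [Nat.sInf_def h1, Nat.sInf_def h2]
  exact Nat.find_comp_succ h1 h2 h

lemma K1 {p : ℕ} (hp : p.Prime) {f : ℕ → ℕ} (hf : IsPartition f) (i : ZMod p) :
    conjFn f 0 = conjFn (E p i f) 0 ∨
      (conjFn f 0 = conjFn (E p i f) 0 + 1 ∧ i = -(conjFn (E p i f) 0 : ZMod p)) := by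
  have hE := E_part hp hf i
  have h1 := rows hf 0
  have h2 := rows hE 0
  set a := conjFn f 0
  set b := conjFn (E p i f) 0
  have hle : ∀ r, E p i f r ≤ f r := E_le i f
  rcases lt_trichotomy a b with h | h | h
  · have := h1 a
    have := h2 a
    have := hle a
    omega
  · exact Or.inl h
  · right
    have e1 := h1 b
    have e2 := h2 b
    have hF : Fire p f i b := by
      by_contra hc
      have : E p i f b = f b := by simp only [E, if_neg hc]; omega
      omega
    have e3 : E p i f b = f b - 1 := by simp only [E, if_pos hF]
    have e4 := fire_lt hp hf hF
    have e5 := h1 (b + 1)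
    have e6 : f b = 1 := by omega
    refine ⟨by omega, ?_⟩
    rw [← hF.1, bt, e6]; push_cast; ring

lemma K2 {p : ℕ} (hp : p.Prime) : ∀ f, IsPartition f → PRestricted p f → ∀ i : ZMod p,
    H p f = H p (E p i f) ∨ (H p f = H p (E p i f) + 1 ∧ i = (H p (E p i f) : ZMod p)) := by
  apply ind
  intro f hf hr ih i
  by_cases h : f = fun _ => 0
  · left
    congr 1
    funext r
    have h1 : E p i f r ≤ f r := E_le i f r
    have h2 : f r = 0 := by rw [h]
    omega
  have hs := H_step hf hr h
  by_cases hE : E p i f = fun _ => 0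
  · right
    have h1 : ∀ r, E p i f r = 0 := fun r => by rw [hE]
    have h0 : 0 < f 0 := by rw [rows hf 0]; exact a_pos hf h
    have hF : Fire p f i 0 := by
      by_contra hc
      have h2 : E p i f 0 = f 0 := by simp only [E, if_neg hc]; omega
      have := h1 0
      omega
    have h2 : E p i f 0 = f 0 - 1 := by simp only [E, if_pos hF]
    have h3 := h1 0
    have h4 := fire_lt hp hf hF
    have h5 : ∀ r, 1 ≤ r → f r = 0 := fun r hr => by
      have := hf.1 1 r hr
      simp only [zero_add] at h4
      omega
    have h6 : J p f = fun _ => 0 := by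
      have hne := J_ne hf hr h
      by_contra hc
      apply hne
      have hp0 : 0 < J p f 0 := by
        rw [rows (J_part hf) 0]; exact a_pos (J_part hf) hc
      funext r
      have hle : J p f r ≤ f r := J_le f r
      rcases Nat.eq_zero_or_pos r with rfl | hr
      · omega
      · have := h5 r hr
        omega
    rw [hs, h6, hE, H_zero]
    refine ⟨rfl, ?_⟩
    rw [← hF.1, bt]
    have : f 0 = 1 := by omega
    rw [this]; simp
  · have hs2 := H_step (E_part hp hf i) (E_restr hp hf hr i) hE
    rw [J_E hp hf] at hs2
    have := ih (J p f) (J_part hf) (J_restr hf hr) (J_le f) (J_ne hf hr h) (i - 1)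
    rw [hs, hs2]
    rcases this with h1 | ⟨h1, h2⟩
    · left; omega
    · right
      refine ⟨by omega, ?_⟩
      push_cast
      rw [← h2]; ring

def Th (p : ℕ) (f : ℕ → ℕ) : Prop := (conjFn f 0 : ZMod p) + (H p f : ZMod p) ≠ 1

def Bot (p : ℕ) (f : ℕ → ℕ) : Prop :=
  (conjFn f 0 : ZMod p) + (H p f : ZMod p) ≠ (f (conjFn f 0 - 1) : ZMod p)

lemma good_step {p : ℕ} (hp : p.Prime) {f : ℕ → ℕ} (hf : IsPartition f) (hr : PRestricted p f)
    (i : ZMod p) (h1 : i ≠ -(conjFn f 0 : ZMod p)) (h2 : i ≠ (H p f : ZMod p))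
    (h : Th p (E p i f)) : Th p f := by
  have := Fact.mk hp
  have h0 : (1 : ZMod p) ≠ 0 := one_ne_zero
  unfold Th at *
  rcases K1 hp hf i with e | ⟨e, e'⟩ <;> rcases K2 hp f hf hr i with g | ⟨g, g'⟩
  · rw [e, g]; exact h
  · intro hc
    apply h1
    rw [g] at hc
    push_cast at hc
    linear_combination g' + hc
  · intro hc
    apply h2
    rw [e] at hc
    push_cast at hc
    linear_combination e' - hc
  · intro hc
    apply h0
    rw [e, g] at hc
    push_cast at hc
    linear_combination hc - e' + g'

end Mull

namespace Mull

lemma Th_of_Bot {p : ℕ} (hp : p.Prime) {f : ℕ → ℕ} (hf : IsPartition f) (hr : PRestricted p f)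
    (h : f ≠ fun _ => 0) (hB : Bot p f) (hT : ∀ i, E p i f ≠ f → Th p (E p i f)) : Th p f := by
  refine good_step hp hf hr (bt p f (conjFn f 0 - 1)) ?_ ?_
    (hT _ (E_ne hp hf (bot_fire hp hf hr h)))
  · rw [bt_bot hf h]
    intro hc
    apply cast_ne (bot_pos hf h) (bot_lt hf hr h)
    linear_combination hc
  · rw [bt_bot hf h]
    intro hc
    apply hB
    linear_combination -hc

lemma J_ge {p : ℕ} (f : ℕ → ℕ) (r : ℕ) : f r ≤ J p f r + 1 := by
  simp only [J]; split_ifs <;> omega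

/-- Rows of length one near the bottom. -/
lemma Y_ones {p : ℕ} {f : ℕ → ℕ} (hf : IsPartition f) (b : ℕ)
    (h1 : ∀ r, b ≤ r → r < conjFn f 0 → f r = 1) :
    ∀ t, t < p → b + t ≤ conjFn f 0 → Y p f (conjFn f 0 - t) = -(conjFn f 0 : ZMod p) ∧
      (0 < t → ¬ Keep p f (conjFn f 0 - t)) := by
  set a := conjFn f 0 with ha
  intro t
  induction t with
  | zero =>
    intro _ _
    exact ⟨Y_tail (a_tail hf) _ le_rfl, fun h => absurd h (lt_irrefl _)⟩
  | succ t ih =>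
    intro ht hb
    obtain ⟨hY, -⟩ := ih (by omega) (by omega)
    have e : a - t = a - (t + 1) + 1 := by omega
    rw [e] at hY
    have hbt : bt p f (a - (t + 1)) ≠ -(a : ZMod p) := by
      rw [bt, h1 (a - (t + 1)) (by omega) (by omega), Nat.cast_sub (by omega)]
      intro hc
      apply cast_ne (p := p) (n := t + 1) (by omega) ht
      linear_combination hc
    refine ⟨?_, fun _ => ?_⟩
    · rw [(Y_spec hf.2).2, hY, ystep, if_neg hbt]
    · unfold Keep
      rw [hY]; exact hbt

lemma main_P {p : ℕ} (hp : p.Prime) : ∀ f, IsPartition f → PRestricted p f →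
    Th p f ∧ ((f ≠ fun _ => 0) → Bot p f) := by
  have := Fact.mk hp
  have h10 : (1 : ZMod p) ≠ 0 := one_ne_zero
  apply ind
  intro f hf hr ih
  by_cases h : f = fun _ => 0
  · refine ⟨?_, fun h' => absurd h h'⟩
    have h0 : conjFn f 0 = 0 := rows_unique (by rw [h]; simp)
    unfold Th
    rw [h0, h, H_zero]
    simp
  have hT : ∀ i, E p i f ≠ f → Th p (E p i f) := fun i hi =>
    (ih _ (E_part hp hf i) (E_restr hp hf hr i) (E_le i f) hi).1
  obtain ⟨hJT, hJB⟩ := ih (J p f) (J_part hf) (J_restr hf hr) (J_le f) (J_ne hf hr h)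
  have hJp : IsPartition (J p f) := J_part hf
  have hH := H_step hf hr h
  have hapos := a_pos hf h
  have hbpos := bot_pos hf h
  have hblt := bot_lt hf hr h
  have hJb := J_bot (p := p) hf hr h
  have hrow := rows hf 0
  have hJle : ∀ r, J p f r ≤ f r := J_le f
  by_cases hl : 2 ≤ f (conjFn f 0 - 1)
  · have haJ : conjFn (J p f) 0 = conjFn f 0 := by
      apply rows_unique
      intro r
      constructor
      · intro h1
        rw [← hrow]
        have := hJle r
        omega
      · intro h1
        have := hf.1 r (conjFn f 0 - 1) (by omega)
        have := J_ge (p := p) f r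
        omega
    have hJ0 : J p f ≠ fun _ => 0 := by
      intro hc
      rw [hc] at hJb
      simp only at hJb
      omega
    have hB : Bot p f := by
      have := hJB hJ0
      unfold Bot at *
      rw [haJ, hJb, Nat.cast_sub (by omega)] at this
      rw [hH]
      intro hc
      apply this
      push_cast at hc ⊢
      linear_combination hc
    exact ⟨Th_of_Bot hp hf hr h hB hT, fun _ => hB⟩
  · have hl1 : f (conjFn f 0 - 1) = 1 := by omega
    suffices hTh : Th p f by
      refine ⟨hTh, fun _ => ?_⟩
      unfold Bot
      rw [hl1]
      rw [Nat.cast_one]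
      exact hTh
    have hrow1 := rows hf 1
    have hone : ∀ r, conjFn f 1 ≤ r → r < conjFn f 0 → f r = 1 := by
      intro r h1 h2
      have := hrow r
      have := hrow1 r
      omega
    have hY := Y_ones (p := p) hf (conjFn f 1) hone
    set a := conjFn f 0 with ha
    set b := conjFn f 1 with hb
    have hba : b < a := by
      have := hrow1 (a - 1)
      omega
    have hp2 := hp.two_le
    have hvan : ∀ r, b ≤ r → a < r + p → J p f r = 0 := by
      intro r h1 h2
      by_cases h3 : r < a
      · have hk := (hY (a - r) (by omega) (by omega)).2 (by omega)
        rw [show a - (a - r) = r by omega] at hk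
        simp only [J, if_neg hk, hone r h1 h3]
      · have := hrow r
        have := hJle r
        omega
    by_cases hn : b + (p - 1) ≤ a
    · -- at least `p - 1` rows of length one
      have haJ : conjFn (J p f) 0 = a - (p - 1) := by
        apply rows_unique
        intro r
        constructor
        · intro h1
          by_contra hc
          have := hvan r (by omega) (by omega)
          omega
        · intro h1
          have h2 : 0 < J p f (a - p) := by
            by_cases h3 : b ≤ a - p
            · have h4 := (hY (p - 1) (by omega) (by omega)).1
              have hk : Keep p f (a - p) := by
                unfold Keep
                rw [show a - p + 1 = a - (p - 1) by omega, h4, bt,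
                  hone (a - p) h3 (by omega), Nat.cast_sub (by omega)]
                simp
              simp only [J, if_pos hk, hone (a - p) h3 (by omega)]
              omega
            · have := hrow1 (a - p)
              have := J_ge (p := p) f (a - p)
              omega
          have := hJp.1 r (a - p) (by omega)
          omega
      unfold Th at *
      rw [haJ, Nat.cast_sub (by omega), Nat.cast_sub (by omega)] at hJT
      rw [hH]
      intro hc
      apply hJT
      push_cast at hc ⊢
      simp only [CharP.cast_eq_zero]
      linear_combination hc
    · have haJ : conjFn (J p f) 0 = b := by
        apply rows_unique
        intro r
        constructor
        · intro h1
          by_contra hc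
          have := hvan r (by omega) (by omega)
          omega
        · intro h1
          have := hrow1 r
          have := J_ge (p := p) f r
          omega
      have hYb := (hY (a - b) (by omega) (by omega)).1
      rw [show a - (a - b) = b by omega] at hYb
      by_cases hb0 : b = 0
      · have hJ0 : J p f = fun _ => 0 := by
          funext r
          exact hvan r (by omega) (by omega)
        unfold Th
        rw [hH, hJ0, H_zero]
        intro hc
        apply cast_ne (p := p) (n := a) (by omega) (by omega)
        push_cast at hc
        linear_combination hc
      · have hq2 : 1 < f (b - 1) := (hrow1 (b - 1)).2 (by omega)
        have hqp : f (b - 1) ≤ p := by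
          have h1 := hr (b - 1)
          rw [show b - 1 + 1 = b by omega, hone b le_rfl hba] at h1
          omega
        have hbt : bt p f (b - 1) = (f (b - 1) : ZMod p) - (b : ZMod p) := by
          rw [bt, Nat.cast_sub (by omega)]; push_cast; ring
        have hJ0 : J p f ≠ fun _ => 0 := by
          intro hc
          have h1 := J_ge (p := p) f (b - 1)
          rw [hc] at h1
          simp only at h1
          omega
        have hB := hJB hJ0
        unfold Bot at hB
        rw [haJ] at hB
        by_cases hk : Keep p f (b - 1)
        · have h1 : J p f (b - 1) = f (b - 1) := by simp [J, if_pos hk]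
          rw [h1] at hB
          unfold Keep at hk
          rw [show b - 1 + 1 = b by omega, hYb, hbt] at hk
          unfold Th
          rw [hH]
          intro hc
          apply hB
          push_cast at hc
          linear_combination hc - hk
        · have h1 : J p f (b - 1) = f (b - 1) - 1 := by simp only [J, if_neg hk]
          rw [h1, Nat.cast_sub (by omega)] at hB
          have hka : bt p f (b - 1) ≠ -(a : ZMod p) := by
            intro hc
            apply hk
            unfold Keep
            rw [show b - 1 + 1 = b by omega, hYb, hc]
          have hF : Fire p f (bt p f (b - 1)) (b - 1) := by
            rw [← normal_iff hp hf]
            refine ⟨remRes_iff.2 ⟨rfl, ?_⟩, ?_⟩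
            · rw [show b - 1 + 1 = b by omega, hone b le_rfl hba]
              omega
            · intro s hs hA
              exfalso
              rw [addRes_iff] at hA
              obtain ⟨h2, h3⟩ := hA
              by_cases e1 : s = b
              · rw [e1, hbt, bt, hone b le_rfl hba] at h2
                apply cast_ne (p := p) (n := f (b - 1) - 1) (by omega) (by omega)
                rw [Nat.cast_sub (by omega)]
                push_cast at h2 ⊢
                linear_combination -h2
              · by_cases e2 : s < a
                · rw [hone s (by omega) e2, hone (s - 1) (by omega) (by omega)] at h3
                  omega
                · have e3 := hrow s
                  have e4 := hrow (s - 1)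
                  have e5 : s = a := by omega
                  apply hka
                  have e6 := hrow a
                  rw [e5, bt_zero (by omega)] at h2
                  push_cast at h2
                  linear_combination -h2
          refine good_step hp hf hr (bt p f (b - 1)) hka ?_ (hT _ (E_ne hp hf hF))
          intro hc
          apply hB
          rw [hbt, hH] at hc
          push_cast at hc ⊢
          linear_combination -hc

/-- One half of the main induction step. -/
lemma half {p : ℕ} (hp : p.Prime) {f F : ℕ → ℕ} (hf : IsPartition f) (hr : PRestricted p f)
    (hF : IsPartition F) (hFr : PRestricted p F) (h : f ≠ fun _ => 0)
    (ih : ∀ k, E p k f ≠ f →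
      conjFn (E p (-k) F) 0 = H p (E p k f) ∧ conjFn (E p k f) 0 = H p (E p (-k) F)) :
    conjFn F 0 ≤ H p f ∧ H p F ≤ conjFn f 0 := by
  obtain ⟨hT, hB⟩ := main_P hp f hf hr
  have hB := hB h
  set k := bt p f (conjFn f 0 - 1) with hk
  have hka : k ≠ -(conjFn f 0 : ZMod p) := by
    rw [hk, bt_bot hf h]
    intro hc
    apply cast_ne (bot_pos hf h) (bot_lt hf hr h)
    linear_combination hc
  have hkH : k ≠ (H p f : ZMod p) := by
    rw [hk, bt_bot hf h]
    intro hc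
    apply hB
    linear_combination -hc
  obtain ⟨h1, h2⟩ := ih k (E_ne hp hf (bot_fire hp hf hr h))
  have a1 := K1 hp hf k
  have a2 := K2 hp f hf hr k
  have b1 := K1 hp hF (-k)
  have b2 := K2 hp F hF hFr (-k)
  rw [h1] at b1
  rw [← h2] at b2
  constructor
  · rcases b1 with e | ⟨e, e'⟩
    · omega
    · rcases a2 with g | ⟨g, g'⟩
      · exact absurd (by rw [g]; exact neg_injective e') hkH
      · omega
  · rcases b2 with e | ⟨e, e'⟩
    · omega
    · rcases a1 with g | ⟨g, g'⟩
      · exact absurd (by rw [g, ← e', neg_neg]) hka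
      · omega

lemma main_Q {p : ℕ} (hp : p.Prime) (M : (ℕ → ℕ) → (ℕ → ℕ))
    (hM0 : M (fun _ => 0) = (fun _ => 0))
    (hMres : ∀ f : ℕ → ℕ, IsPartition f → PRestricted p f →
      IsPartition (M f) ∧ PRestricted p (M f))
    (hMinv : ∀ f : ℕ → ℕ, IsPartition f → PRestricted p f → M (M f) = f)
    (hMnor : ∀ f : ℕ → ℕ, IsPartition f → PRestricted p f → ∀ i : ZMod p,
      norCount p f i = norCount p (M f) (-i) ∧
        M (remNorm p i f) = remNorm p (-i) (M f)) :
    ∀ f, IsPartition f → PRestricted p f → conjFn (M f) 0 = H p f ∧ conjFn f 0 = H p (M f) := by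
  apply ind
  intro f hf hr ih
  by_cases h : f = fun _ => 0
  · have h0 : conjFn (fun _ => 0) 0 = 0 := rows_unique (by simp)
    rw [h, hM0, H_zero, h0]
    exact ⟨rfl, rfl⟩
  obtain ⟨hF, hFr⟩ := hMres f hf hr
  have hcomm : ∀ k, M (E p k f) = E p (-k) (M f) := by
    intro k
    have := (hMnor f hf hr k).2
    rwa [remNorm_eq hp hf, remNorm_eq hp hF] at this
  have hE : ∀ k, E p k f ≠ f →
      conjFn (E p (-k) (M f)) 0 = H p (E p k f) ∧ conjFn (E p k f) 0 = H p (E p (-k) (M f)) := by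
    intro k hk
    rw [← hcomm]
    exact ih _ (E_part hp hf k) (E_restr hp hf hr k) (E_le k f) hk
  have h1 := half hp hf hr hF hFr h hE
  have hF0 : M f ≠ fun _ => 0 := by
    intro hc
    apply h
    rw [← hMinv f hf hr, hc, hM0]
  have hne : ∀ k, E p k (M f) ≠ M f → E p (-k) f ≠ f := by
    intro k hk hc
    apply hk
    have := hcomm (-k)
    rw [hc, neg_neg] at this
    exact this.symm
  have h2 := half hp hF hFr hf hr hF0 (by
    intro k hk
    have := hE (-k) (hne k hk)
    rw [neg_neg] at this
    exact ⟨this.2, this.1⟩)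
  exact ⟨le_antisymm h1.1 h2.2, le_antisymm h2.1 h1.2⟩

end Mull

/-- Let `p` be a prime and let `M` be the Mullineux map on `p`-restricted partitions,
characterised (uniquely) by: `M ∅ = ∅`, `M` preserves `p`-restricted partitions, `M`
is an involution, and `M` intertwines the removal of normal nodes, with
`nor_i(λ) = nor_{−i}(M λ)` and `M(λ^{▾i}) = (M λ)^{▾(−i)}` (Kleshchev's description,
reflecting `e_i(D ⊗ sgn) ≅ (e_{−i} D) ⊗ sgn`). Then for every `p`-restricted
partition `λ`, the number of non-zero parts of `λ` plus the number of non-zero parts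
of `M λ` is not congruent to `1` modulo `p`. -/
theorem stmt17 (p : ℕ) (hp : p.Prime) (M : (ℕ → ℕ) → (ℕ → ℕ))
    (hM0 : M (fun _ => 0) = (fun _ => 0))
    (hMres : ∀ f : ℕ → ℕ, IsPartition f → PRestricted p f →
      IsPartition (M f) ∧ PRestricted p (M f))
    (hMinv : ∀ f : ℕ → ℕ, IsPartition f → PRestricted p f → M (M f) = f)
    (hMnor : ∀ f : ℕ → ℕ, IsPartition f → PRestricted p f → ∀ i : ZMod p,
      norCount p f i = norCount p (M f) (-i) ∧
        M (remNorm p i f) = remNorm p (-i) (M f))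
    (f : ℕ → ℕ) (hf : IsPartition f) (hfr : PRestricted p f) :
    ¬ (conjFn f 0 + conjFn (M f) 0 ≡ 1 [MOD p]) := by
  have hQ := Mull.main_Q hp M hM0 hMres hMinv hMnor f hf hfr
  have hT := (Mull.main_P hp f hf hfr).1
  rw [hQ.1]
  intro h
  apply hT
  have := (ZMod.natCast_eq_natCast_iff _ _ p).2 h
  push_cast at this
  exact this
end
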